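/- Independence of the difference order (Corollary 4.3): Let p, q, r ∈ (0,∞], α₁, α₂ ∈ ℝ, α₃ ≥ 0, σ₁ ∈ (0,∞], σ₂ = p, let {t_k} ∈ X^{α₃}_{α,σ,p} be a p-admissible weight sequence, and let l ∈ ℕ with l > α₂. Then for every integer l' > l the quasi-norms of B̃^{l'}_{p,q,r}(ℝⁿ,{t_k}) and B̃^{l}_{p,q,r}(ℝⁿ,{t_k}) are equivalent: there exist C₁, C₂ > 0 with C₁·‖φ | B̃^{l}_{p,q,r}(ℝⁿ,{t_k})‖ ≤ ‖φ | B̃^{l'}_{p,q,r}(ℝⁿ,{t_k})‖ ≤ C₂·‖φ | B̃^{l}_{p,q,r}(ℝⁿ,{t_k})‖ for all φ ∈ L_r^{loc}(ℝⁿ); in particular the two spaces coincide. -/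

import Mathlib

open MeasureTheory ENNReal Filter
open scoped Classical

noncomputable section

/-- `ℓ_q` quasinorm of a family of extended nonnegative reals (supremum when `q = ∞`). -/
def lqNorm {ι : Type*} (q : ℝ≥0∞) (c : ι → ℝ≥0∞) : ℝ≥0∞ :=
  if q = ∞ then ⨆ i, c i else (∑' i, c i ^ q.toReal) ^ (1 / q.toReal)

/-- `L_p` quasinorm of an `ℝ≥0∞`-valued function (essential supremum when `p = ∞`). -/
def lpNormE {α : Type*} [MeasurableSpace α] (p : ℝ≥0∞) (μ : Measure α) (f : α → ℝ≥0∞) : ℝ≥0∞ :=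
  if p = ∞ then essSup f μ else (∫⁻ x, f x ^ p.toReal ∂μ) ^ (1 / p.toReal)

abbrev Rn (n : ℕ) := Fin n → ℝ

/-- Open cube centred at `x` of half-side `s` (i.e. `x + s·Iⁿ`). -/
def openCube {n : ℕ} (x : Rn n) (s : ℝ) : Set (Rn n) := {y | ∀ i, |y i - x i| < s}

/-- Open axis-parallel cube with lower corner `c` and side `s`. -/
def cubeAt {n : ℕ} (c : Rn n) (s : ℝ) : Set (Rn n) := {x | ∀ i, c i < x i ∧ x i < c i + s}

/-- Open dyadic cube `Q^n_{k,m}` of side `2^{-k}`. -/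
def dyadicCube (n k : ℕ) (m : Fin n → ℤ) : Set (Rn n) :=
  {x | ∀ i, (m i : ℝ) / 2 ^ k < x i ∧ x i < ((m i : ℝ) + 1) / 2 ^ k}

/-- Half-open dyadic cube `Q̃^n_{k,m}`. -/
def dyadicCubeHalf (n k : ℕ) (m : Fin n → ℤ) : Set (Rn n) :=
  {x | ∀ i, (m i : ℝ) / 2 ^ k ≤ x i ∧ x i < ((m i : ℝ) + 1) / 2 ^ k}

def dyadicCenter (n k : ℕ) (m : Fin n → ℤ) : Rn n := fun i => ((m i : ℝ) + 1 / 2) / 2 ^ k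

/-- The concentric dilate `c·Q^n_{k,m}` of a dyadic cube. -/
def dilatedCube (n k : ℕ) (m : Fin n → ℤ) (c : ℝ) : Set (Rn n) :=
  openCube (dyadicCenter n k m) (c / 2 ^ (k + 1))

def euclNorm {d : ℕ} (y : Rn d) : ℝ := Real.sqrt (∑ i, y i ^ 2)

/-- The difference `Δ^l(h)g(x)`. -/
def diffl {n : ℕ} (l : ℕ) (h : Rn n) (g : Rn n → ℝ) (x : Rn n) : ℝ :=
  ∑ j ∈ Finset.range (l + 1), ((l.choose j : ℝ) * (-1 : ℝ) ^ (l + j)) * g (x + (j : ℝ) • h)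

/-- The difference `Δ^l(h,Ω)g(x)`, vanishing unless the segment `[x, x + l·h]` lies in `Ω`. -/
def difflOn {n : ℕ} (l : ℕ) (Ω : Set (Rn n)) (h : Rn n) (g : Rn n → ℝ) (x : Rn n) : ℝ :=
  if ∀ τ ∈ Set.Icc (0 : ℝ) 1, x + (τ * l) • h ∈ Ω then diffl l h g x else 0

/-- `δ^l_r(Q)g`, where `s` is the side length of the cube `Q`. -/
def deltaE (n l : ℕ) (r : ℝ≥0∞) (s : ℝ) (Q : Set (Rn n)) (g : Rn n → ℝ) : ℝ≥0∞ :=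
  ENNReal.ofReal s ^ (-(2 * (n : ℝ)) / r.toReal) *
    eLpNorm (fun hx : Rn n × Rn n => diffl l hx.1 g hx.2) r
      ((volume.restrict (openCube (0 : Rn n) s)).prod (volume.restrict Q))

/-- `δ^l_r(Q,Ω)g`, where `s` is the side length of the cube `Q`. -/
def deltaEOn (n l : ℕ) (r : ℝ≥0∞) (s : ℝ) (Q Ω : Set (Rn n)) (g : Rn n → ℝ) : ℝ≥0∞ :=
  ENNReal.ofReal s ^ (-(2 * (n : ℝ)) / r.toReal) *
    eLpNorm (fun hx : Rn n × Rn n => difflOn l Ω hx.1 g hx.2) r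
      ((volume.restrict (openCube (0 : Rn n) s)).prod (volume.restrict Q))

/-- `Δ̄^l_r(s)g(x)`. -/
def barDelta (n l : ℕ) (r : ℝ≥0∞) (s : ℝ) (g : Rn n → ℝ) (x : Rn n) : ℝ≥0∞ :=
  ENNReal.ofReal s ^ (-(n : ℝ) / r.toReal) *
    eLpNorm (fun h : Rn n => diffl l h g x) r (volume.restrict (openCube (0 : Rn n) s))

/-- Membership in `L_r^{loc}(ℝⁿ)`. -/
def MemLrLoc (n : ℕ) (r : ℝ≥0∞) (φ : Rn n → ℝ) : Prop :=
  Measurable φ ∧ ∀ K : Set (Rn n), IsCompact K → eLpNorm φ r (volume.restrict K) < ∞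

def IsWeight {n : ℕ} (w : Rn n → ℝ) : Prop := Measurable w ∧ ∀ x, 0 < w x

/-- A `p`-admissible weight sequence. -/
def pAdmissible (n : ℕ) (p : ℝ≥0∞) (t : ℕ → Rn n → ℝ) : Prop :=
  ∀ k, IsWeight (t k) ∧ MemLrLoc n p (t k)

/-- The multiple sequence `t_{k,m} = ‖t_k‖_{L_p(Q^n_{k,m})}` associated with a weight sequence. -/
def tkm (n : ℕ) (p : ℝ≥0∞) (t : ℕ → Rn n → ℝ) (k : ℕ) (m : Fin n → ℤ) : ℝ≥0∞ :=
  eLpNorm (t k) p (volume.restrict (dyadicCube n k m))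

/-- The weight `t̄_k` built from a multiple sequence `T`. -/
def tbarOf (n : ℕ) (p : ℝ≥0∞) (T : ℕ → (Fin n → ℤ) → ℝ≥0∞) (k : ℕ) (x : Rn n) : ℝ≥0∞ :=
  (2 : ℝ≥0∞) ^ (((k * n : ℕ) : ℝ) / p.toReal) *
    ∑' m : Fin n → ℤ, (dyadicCubeHalf n k m).indicator (fun _ => T k m) x

/-- `(2^{kn} ∫_Q f^e)^{1/e}`, with the essential supremum modification for `e = ∞`. -/
def avgNorm (n k : ℕ) (e : ℝ≥0∞) (Q : Set (Rn n)) (f : Rn n → ℝ≥0∞) : ℝ≥0∞ :=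
  if e = ∞ then essSup f (volume.restrict Q)
  else ((2 : ℝ≥0∞) ^ (k * n) * ∫⁻ x in Q, f x ^ e.toReal) ^ (1 / e.toReal)

/-- Conditions (2.14)–(2.16) of the class `X^{α₃}_{α,σ,p}`, expressed for a multiple
sequence `T`. -/
def MemXseq (n : ℕ) (α₁ α₂ α₃ : ℝ) (σ₁ σ₂ p : ℝ≥0∞) (T : ℕ → (Fin n → ℤ) → ℝ≥0∞) : Prop :=
  (∃ C₁ : ℝ≥0∞, 0 < C₁ ∧ C₁ < ∞ ∧ ∀ k j : ℕ, k ≤ j → ∀ m : Fin n → ℤ,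
    avgNorm n k p (dyadicCube n k m) (tbarOf n p T k) *
      avgNorm n k σ₁ (dyadicCube n k m) (fun x => (tbarOf n p T j x)⁻¹) ≤
      C₁ * (2 : ℝ≥0∞) ^ (α₁ * ((k : ℝ) - (j : ℝ)))) ∧
  (∃ C₂ : ℝ≥0∞, 0 < C₂ ∧ C₂ < ∞ ∧ ∀ k j : ℕ, k ≤ j → ∀ m : Fin n → ℤ,
    (avgNorm n k p (dyadicCube n k m) (tbarOf n p T k))⁻¹ *
      avgNorm n k σ₂ (dyadicCube n k m) (tbarOf n p T j) ≤
      C₂ * (2 : ℝ≥0∞) ^ (α₂ * ((j : ℝ) - (k : ℝ)))) ∧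
  (∀ k : ℕ, ∀ m m' : Fin n → ℤ, (∀ i, |m i - m' i| ≤ 1) →
    0 < T k m ∧ T k m ≤ (2 : ℝ≥0∞) ^ (α₃ : ℝ) * T k m')

/-- The weighted class `X^{α₃}_{α,σ,p}` of weight sequences. -/
def MemX (n : ℕ) (α₁ α₂ α₃ : ℝ) (σ₁ σ₂ p : ℝ≥0∞) (t : ℕ → Rn n → ℝ) : Prop :=
  pAdmissible n p t ∧ MemXseq n α₁ α₂ α₃ σ₁ σ₂ p (tkm n p t)

/-- Quasinorm of `B̃^l_{p,q,r}(ℝⁿ, T)` with an `ℝ≥0∞`-valued weight sequence `T`. -/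
def tildeBnormE (n l : ℕ) (p q r : ℝ≥0∞) (T : ℕ → Rn n → ℝ≥0∞) (φ : Rn n → ℝ) : ℝ≥0∞ :=
  lqNorm q (fun k : ℕ =>
    lpNormE p volume (fun x =>
      T (k + 1) x *
        deltaE n l r ((2 : ℝ) ^ (1 - ((k : ℤ) + 1))) (openCube x ((2 : ℝ) ^ (-((k : ℤ) + 1)))) φ)) +
  lpNormE p volume (fun x => T 0 x * eLpNorm φ r (volume.restrict (openCube x 1)))

/-- Quasinorm of `B̃^l_{p,q,r}(ℝⁿ, {t_k})`. -/
def tildeBnorm (n l : ℕ) (p q r : ℝ≥0∞) (t : ℕ → Rn n → ℝ) (φ : Rn n → ℝ) : ℝ≥0∞ :=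
  tildeBnormE n l p q r (fun k x => ENNReal.ofReal (t k x)) φ

/-- Membership in `B̃^l_{p,q,r}(ℝⁿ, {t_k})`. -/
def MemTildeB (n l : ℕ) (p q r : ℝ≥0∞) (t : ℕ → Rn n → ℝ) (φ : Rn n → ℝ) : Prop :=
  MemLrLoc n r φ ∧ tildeBnorm n l p q r t φ < ∞

/-- Quasinorm of `B̄^l_{p,q,r}(ℝⁿ, {t_k})`. -/
def barBnorm (n l : ℕ) (p q r : ℝ≥0∞) (t : ℕ → Rn n → ℝ) (φ : Rn n → ℝ) : ℝ≥0∞ :=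
  lqNorm q (fun k : ℕ =>
    lpNormE p volume (fun x =>
      ENNReal.ofReal (t (k + 1) x) * barDelta n l r ((2 : ℝ) ^ (-((k : ℤ) + 1))) φ x)) +
  lpNormE p volume (fun x => ENNReal.ofReal (t 0 x) * eLpNorm φ r (volume.restrict (openCube x 1)))

/-- Membership in `B̄^l_{p,q,r}(ℝⁿ, {t_k})`. -/
def MemBarB (n l : ℕ) (p q r : ℝ≥0∞) (t : ℕ → Rn n → ℝ) (φ : Rn n → ℝ) : Prop :=
  MemLrLoc n r φ ∧ barBnorm n l p q r t φ < ∞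

/-- The class `A^{loc}_∞`. -/
def MemAlocInfty (n : ℕ) (w : Rn n → ℝ) : Prop :=
  ∃ α : ℝ, α ∈ Set.Ioo (0 : ℝ) 1 ∧ ∃ M : ℝ≥0∞, M < ∞ ∧
    ∀ (c : Rn n) (s : ℝ), 0 < s → s ≤ 1 →
      ∀ F : Set (Rn n), F ⊆ cubeAt c s → MeasurableSet F →
        ENNReal.ofReal α * volume (cubeAt c s) ≤ volume F →
        (∫⁻ x in cubeAt c s, ENNReal.ofReal (w x)) ≤ M * ∫⁻ x in F, ENNReal.ofReal (w x)

/-- The class `A^{loc}_1`. -/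
def MemAloc1 (n : ℕ) (w : Rn n → ℝ) : Prop :=
  ∃ C : ℝ≥0∞, C < ∞ ∧ ∀ (c : Rn n) (s : ℝ), 0 < s → s ≤ 1 →
    ∀ᵐ x ∂volume.restrict (cubeAt c s),
      (∫⁻ y in cubeAt c s, ENNReal.ofReal (w y)) ≤ C * volume (cubeAt c s) * ENNReal.ofReal (w x)

/-- The class `A^{loc}_{p₀}` for `p₀ > 1`. -/
def MemAlocGt (n : ℕ) (p₀ : ℝ) (w : Rn n → ℝ) : Prop :=
  ∃ C : ℝ≥0∞, C < ∞ ∧ ∀ (c : Rn n) (s : ℝ), 0 < s → s ≤ 1 →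
    ((volume (cubeAt c s))⁻¹ * ∫⁻ y in cubeAt c s, ENNReal.ofReal (w y)) *
      ((volume (cubeAt c s))⁻¹ *
        ∫⁻ y in cubeAt c s, ENNReal.ofReal (w y) ^ (-(1 : ℝ) / (p₀ - 1))) ^ (p₀ - 1) ≤ C

/-- The class `A^{loc}_{p₀}` for `p₀ ∈ [1,∞)`. -/
def MemAlocP (n : ℕ) (p₀ : ℝ) (w : Rn n → ℝ) : Prop :=
  if p₀ = 1 then MemAloc1 n w else MemAlocGt n p₀ w

/-- The class `{}^{loc}Y^{α₃}_{α₁,α₂}` of weight sequences of variable smoothness. -/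
def MemLocY (n : ℕ) (α₁ α₂ α₃ : ℝ) (s : ℕ → Rn n → ℝ) : Prop :=
  (∀ k, IsWeight (s k)) ∧
  (∃ C : ℝ, 0 < C ∧ ∀ j k : ℕ, j ≤ k → ∀ x : Rn n,
    C⁻¹ * (2 : ℝ) ^ (α₁ * ((k : ℝ) - (j : ℝ))) ≤ s k x / s j x ∧
      s k x / s j x ≤ C * (2 : ℝ) ^ (α₂ * ((k : ℝ) - (j : ℝ)))) ∧
  (∀ k : ℕ, ∀ x y : Rn n, euclNorm (x - y) ≤ (2 : ℝ) ^ (-(k : ℤ)) →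
    s k x ≤ (2 : ℝ) ^ α₃ * s k y)

/-- The set `Ξ^{d,n}_{k,m} = Q^n_{k,m} × (2^{-k}B^d ∖ 2^{-k-1}B^d) ⊂ ℝ^{n+d}`. -/
def Xi (n d k : ℕ) (m : Fin n → ℤ) : Set (Rn (n + d)) :=
  {z | (fun i => z (Fin.castAdd d i)) ∈ dyadicCube n k m ∧
       euclNorm (fun i : Fin d => z (Fin.natAdd n i)) < (2 : ℝ) ^ (-(k : ℤ)) ∧
       (2 : ℝ) ^ (-(k : ℤ) - 1) ≤ euclNorm (fun i : Fin d => z (Fin.natAdd n i))}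

/-- The multiple sequence `γ̂_{k,m} = ‖γ‖_{L_p(Ξ^{d,n}_{k,m})}` generated by a weight `γ`. -/
def gammaHat (n d : ℕ) (p : ℝ≥0∞) (γ : Rn (n + d) → ℝ) (k : ℕ) (m : Fin n → ℤ) : ℝ≥0∞ :=
  eLpNorm γ p (volume.restrict (Xi n d k m))

def delta1Good (n d : ℕ) (p : ℝ≥0∞) (γ : Rn (n + d) → ℝ) (δ : ℝ) : Prop :=
  ∃ C : ℝ≥0∞, C < ∞ ∧ ∀ k j : ℕ, k ≤ j → ∀ m : Fin n → ℤ,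
    (∑' m' : {m' : Fin n → ℤ // dyadicCube n j m' ⊆ dyadicCube n k m},
        gammaHat n d p γ j m'.1 ^ p.toReal) ≤
      C * (2 : ℝ≥0∞) ^ ((((k : ℝ) - (j : ℝ)) * (d : ℝ)) * δ) * gammaHat n d p γ k m ^ p.toReal

/-- `δ₁(γ,n,d)`. -/
def delta1 (n d : ℕ) (p : ℝ≥0∞) (γ : Rn (n + d) → ℝ) : ℝ :=
  sSup {δ : ℝ | 0 < δ ∧ delta1Good n d p γ δ}

def delta2Good (n d : ℕ) (p : ℝ≥0∞) (γ : Rn (n + d) → ℝ) (δ : ℝ) : Prop :=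
  ∃ C : ℝ≥0∞, C < ∞ ∧ ∀ k j : ℕ, k ≤ j → ∀ m : Fin n → ℤ,
    ∀ G : Set (Fin n → ℤ), (∀ m' ∈ G, dyadicCube n j m' ⊆ dyadicCube n k m) →
      (∑' m' : G, gammaHat n d p γ j m'.1 ^ p.toReal) ≤
        C * (volume (⋃ m' ∈ G, dyadicCube n j m') / volume (dyadicCube n k m)) ^ δ *
          ∑' m' : {m' : Fin n → ℤ // dyadicCube n j m' ⊆ dyadicCube n k m},
            gammaHat n d p γ j m'.1 ^ p.toReal

/-- `δ₂(γ,n,d)`. -/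
def delta2 (n d : ℕ) (p : ℝ≥0∞) (γ : Rn (n + d) → ℝ) : ℝ :=
  sSup {δ : ℝ | 0 < δ ∧ delta2Good n d p γ δ}

/-- The cardinal B-spline of degree `deg` with knots `0, 1, …, deg + 1`. -/
def cardB : ℕ → ℝ → ℝ
  | 0, x => if 0 ≤ x ∧ x < 1 then 1 else 0
  | (d + 1), x => (x / (d + 1)) * cardB d x + (((d : ℝ) + 2 - x) / (d + 1)) * cardB d (x - 1)

/-- The tensor-product B-spline `N^{deg}_{k,m}` on `ℝⁿ`. -/
def Bspl (n deg k : ℕ) (m : Fin n → ℤ) (x : Rn n) : ℝ :=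
  ∏ i, cardB deg (2 ^ k * x i - (m i : ℝ))

/-- The spline `Σ_m β_m N^{deg}_{k,m}`. -/
def splineSum (n deg k : ℕ) (β : (Fin n → ℤ) → ℝ) (x : Rn n) : ℝ :=
  ∑' m, β m * Bspl n deg k m x

/-- A dyadic spline of degree `deg` (an element of `Σ^{deg} = ⋃_k Σ^{deg}_k`). -/
def IsSplineFn (n deg : ℕ) (S : Rn n → ℝ) : Prop :=
  ∃ (k : ℕ) (β : (Fin n → ℤ) → ℝ), S = splineSum n deg k β

/-- The weighted best spline approximation `s_k(φ)` by splines of degree `deg`. -/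
def sApprox (n deg : ℕ) (p r : ℝ≥0∞) (T : ℕ → (Fin n → ℤ) → ℝ≥0∞) (φ : Rn n → ℝ) (k : ℕ) :
    ℝ≥0∞ :=
  ⨅ β : (Fin n → ℤ) → ℝ,
    lqNorm p (fun m => T k m *
      eLpNorm (fun x => φ x - splineSum n deg k β x) r (volume.restrict (dyadicCube n k m)))

/-- `s_j(φ)` for `j ∈ {-1, 0, 1, 2, …}`, including the term `s_{-1}`. -/
def sApproxZ (n deg : ℕ) (p r : ℝ≥0∞) (T : ℕ → (Fin n → ℤ) → ℝ≥0∞) (φ : Rn n → ℝ) (j : ℤ) :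
    ℝ≥0∞ :=
  if j < 0 then
    lqNorm p (fun m => T 0 m * eLpNorm φ r (volume.restrict (dyadicCube n 0 m)))
  else sApprox n deg p r T φ j.toNat

/-- Local best polynomial approximation `E_l(φ,Q)_r` by polynomials of total degree `< l`. -/
def bestApproxE (n l : ℕ) (r : ℝ≥0∞) (φ : Rn n → ℝ) (Q : Set (Rn n)) : ℝ≥0∞ :=
  ⨅ P : {P : MvPolynomial (Fin n) ℝ // P.totalDegree < l},
    eLpNorm (fun x => φ x - MvPolynomial.eval x P.1) r (volume.restrict Q)

/-- The modulus of continuity `ω_l(φ,Q)_r`. -/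
def modulusE (n l : ℕ) (r : ℝ≥0∞) (φ : Rn n → ℝ) (Q : Set (Rn n)) : ℝ≥0∞ :=
  ⨆ h : Rn n, eLpNorm (difflOn l Q h φ) r (volume : Measure (Rn n))

def partialDeriv {N : ℕ} (i : Fin N) (ψ : Rn N → ℝ) : Rn N → ℝ :=
  fun x => fderiv ℝ ψ x (Pi.single i 1)

def iterPD {N : ℕ} : List (Fin N) → (Rn N → ℝ) → Rn N → ℝ
  | [], ψ => ψ
  | i :: L, ψ => partialDeriv i (iterPD L ψ)

def multiIdxList {N : ℕ} (α : Fin N → ℕ) : List (Fin N) :=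
  (List.finRange N).foldr (fun i L => List.replicate (α i) i ++ L) []

/-- Iterated partial derivative `D^α`. -/
def multiDeriv {N : ℕ} (α : Fin N → ℕ) (ψ : Rn N → ℝ) : Rn N → ℝ :=
  iterPD (multiIdxList α) ψ

/-- `g` is the weak (Sobolev) derivative `D^α f`. -/
def IsWeakDeriv {N : ℕ} (α : Fin N → ℕ) (f g : Rn N → ℝ) : Prop :=
  ∀ ψ : Rn N → ℝ, ContDiff ℝ (⊤ : ℕ∞) ψ → HasCompactSupport ψ →
    ∫ x, f x * multiDeriv α ψ x = (-1 : ℝ) ^ (∑ i, α i) * ∫ x, g x * ψ x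

/-- The weighted Sobolev norm `Σ_{|α| ≤ l} ‖γ · D^α f‖_{L_p}` computed from a system `D` of
weak derivatives. -/
def sobNorm (N : ℕ) (p : ℝ≥0∞) (l : ℕ) (γ : Rn N → ℝ) (D : (Fin N → ℕ) → Rn N → ℝ) : ℝ≥0∞ :=
  ∑' α : Fin N → ℕ,
    if (∑ i, α i) ≤ l then eLpNorm (fun x => γ x * D α x) p volume else 0

/-- Membership in the weighted Sobolev space `W^l_p(ℝ^N, γ)`, witnessed by the system `D`
of weak derivatives of `f`. -/
def MemW (N : ℕ) (p : ℝ≥0∞) (l : ℕ) (γ : Rn N → ℝ) (f : Rn N → ℝ)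
    (D : (Fin N → ℕ) → Rn N → ℝ) : Prop :=
  MeasureTheory.LocallyIntegrable f volume ∧ D 0 = f ∧
    (∀ α : Fin N → ℕ, (∑ i, α i) ≤ l →
      MeasureTheory.LocallyIntegrable (D α) volume ∧ IsWeakDeriv α f (D α)) ∧
    sobNorm N p l γ D < ∞

/-- `φ` is the trace of `f` on the plane `y = 0`. -/
def IsTraceSob {n d : ℕ} (f : Rn (n + d) → ℝ) (φ : Rn n → ℝ) : Prop :=
  ∃ f' : Rn (n + d) → ℝ, f' =ᵐ[volume] f ∧
    ∀ (c : Rn n) (s : ℝ), 0 < s →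
      Filter.Tendsto (fun y : Rn d => ∫ x in cubeAt c s, |f' (Fin.append x y) - φ x|)
        (nhds 0) (nhds 0)

/-- The weight sequence `γ_k(x) = 2^{k(l+n/p)} Σ_m χ_{Q̃^n_{k,m}}(x) γ̂_{k,m}`. -/
def gammaSeq (n d : ℕ) (p : ℝ≥0∞) (l : ℕ) (γ : Rn (n + d) → ℝ) (k : ℕ) (x : Rn n) : ℝ≥0∞ :=
  (2 : ℝ≥0∞) ^ ((k : ℝ) * ((l : ℝ) + (n : ℝ) / p.toReal)) *
    ∑' m : Fin n → ℤ, (dyadicCubeHalf n k m).indicator (fun _ => gammaHat n d p γ k m) x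

/-- Conjugate exponent in `ℝ≥0∞`. -/
def conjE (e : ℝ≥0∞) : ℝ≥0∞ := (1 - e⁻¹)⁻¹

/-- The exponent `p_θ`. -/
def pTheta (p θ : ℝ≥0∞) : ℝ≥0∞ := if θ = ∞ ∧ p = ∞ then 1 else p / θ

/-!
The mean `δ^l` at scale `s` is, up to means of `(l + 1)`-fold differences, `2 ^ (-lN)` times the
mean `δ^l` at scale `2 ^ N * s`. Doubling a step multiplies an `l`-fold difference by `2 ^ l`,
modulo differences of higher order, and Kemperman's identity writes an `l`-fold difference minus
its translate as a combination of `(l + 1)`-fold differences, so that the base point can be dilated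
along with the step. Changing the scale by `2 ^ N` costs at most a factor of order `2 ^ (α₂ N)` in
the weights. As `α₂ < l`, for `N` large the `l`-fold term on the right is absorbed by the left-hand
side of the quasinorm estimate, and `l` can be raised to `l + 1`. The opposite inequality holds
because an `(l + 1)`-fold difference is a difference of two `l`-fold ones.
-/

/-! ### Quasinorms -/

section Quasinorms

variable {ι κ α : Type*} {p q : ℝ≥0∞}

theorem one_le_LpAddConst (p : ℝ≥0∞) : 1 ≤ LpAddConst p := by
  rw [LpAddConst]
  split_ifs with h
  · refine ENNReal.one_le_rpow one_le_two (sub_pos.2 ?_)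
    exact one_lt_one_div (ENNReal.toReal_pos h.1.ne' (h.2.trans one_lt_top).ne)
      (ENNReal.toReal_strict_mono one_ne_top h.2)
  · exact le_rfl

theorem eLpNorm_sum_le_LpAddConst {ε : Type*} [TopologicalSpace ε] [ESeminormedAddCommMonoid ε]
    [ContinuousAdd ε] [MeasurableSpace α] {μ : Measure α} {f : κ → α → ε} (s : Finset κ)
    (hf : ∀ i ∈ s, AEStronglyMeasurable (f i) μ) (p : ℝ≥0∞) :
    eLpNorm (∑ i ∈ s, f i) p μ ≤ LpAddConst p ^ s.card * ∑ i ∈ s, eLpNorm (f i) p μ := by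
  induction s using Finset.induction_on with
  | empty => simp
  | insert a s ha ih =>
    have hs := fun i hi => hf i (Finset.mem_insert_of_mem hi)
    rw [Finset.sum_insert ha, Finset.sum_insert ha, Finset.card_insert_of_notMem ha, pow_succ',
      mul_assoc, mul_add (LpAddConst p ^ _)]
    refine (eLpNorm_add_le' (hf a (Finset.mem_insert_self a s))
      (Finset.aestronglyMeasurable_sum s hs) p).trans ?_
    gcongr
    · exact le_mul_of_one_le_left' (one_le_pow₀ (one_le_LpAddConst p))
    · exact ih hs

theorem eLpNorm_restrict_le_of_subset_biUnion {ε : Type*} [TopologicalSpace ε]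
    [ContinuousENorm ε] [MeasurableSpace α] {μ : Measure α} {f : α → ε}
    (hf : AEStronglyMeasurable f μ) {s : Finset κ} {A : κ → Set α}
    (hA : ∀ i ∈ s, MeasurableSet (A i)) {S : Set α} (hS : S ⊆ ⋃ i ∈ s, A i) (p : ℝ≥0∞) :
    eLpNorm f p (μ.restrict S) ≤
      LpAddConst p ^ s.card * ∑ i ∈ s, eLpNorm f p (μ.restrict (A i)) := by
  have hfe : AEMeasurable (fun x => ‖f x‖ₑ) μ := hf.enorm
  have hU : MeasurableSet (⋃ i ∈ s, A i) := s.measurableSet_biUnion hA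
  have hcover : ∀ x, ‖(⋃ i ∈ s, A i).indicator (fun x => ‖f x‖ₑ) x‖ₑ ≤
      ‖(∑ i ∈ s, (A i).indicator fun x => ‖f x‖ₑ) x‖ₑ := by
    intro x
    rw [enorm_eq_self, enorm_eq_self, Finset.sum_apply]
    refine Set.indicator_apply_le' (fun hx => ?_) fun _ => zero_le
    obtain ⟨i, hi, hxi⟩ := Set.mem_iUnion₂.1 hx
    calc ‖f x‖ₑ = (A i).indicator (fun x => ‖f x‖ₑ) x := by rw [Set.indicator_of_mem hxi]
      _ ≤ ∑ i ∈ s, (A i).indicator (fun x => ‖f x‖ₑ) x :=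
        Finset.single_le_sum (f := fun i => (A i).indicator (fun x => ‖f x‖ₑ) x)
          (fun _ _ => zero_le) hi
  calc eLpNorm f p (μ.restrict S)
      ≤ eLpNorm f p (μ.restrict (⋃ i ∈ s, A i)) :=
        eLpNorm_mono_measure f (Measure.restrict_mono hS le_rfl)
    _ = eLpNorm ((⋃ i ∈ s, A i).indicator fun x => ‖f x‖ₑ) p μ := by
        rw [eLpNorm_indicator_eq_eLpNorm_restrict hU, eLpNorm_enorm]
    _ ≤ eLpNorm (∑ i ∈ s, (A i).indicator fun x => ‖f x‖ₑ) p μ := eLpNorm_mono_enorm hcover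
    _ ≤ LpAddConst p ^ s.card * ∑ i ∈ s, eLpNorm ((A i).indicator fun x => ‖f x‖ₑ) p μ :=
        eLpNorm_sum_le_LpAddConst s
          (fun i hi => (hfe.indicator (hA i hi)).aestronglyMeasurable) p
    _ = _ := by
        congr 1
        refine Finset.sum_congr rfl fun i hi => ?_
        rw [eLpNorm_indicator_eq_eLpNorm_restrict (hA i hi), eLpNorm_enorm]

theorem lpNormE_eq_eLpNorm [MeasurableSpace α] (hp : 0 < p) (μ : Measure α) (f : α → ℝ≥0∞) :
    lpNormE p μ f = eLpNorm f p μ := by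
  by_cases h : p = ∞
  · simp [lpNormE, h, eLpNormEssSup]
  · simp [lpNormE, h, eLpNorm_eq_lintegral_rpow_enorm_toReal hp.ne' h]

theorem lpNormE_mono_ae [MeasurableSpace α] {μ : Measure α} {f g : α → ℝ≥0∞} (h : f ≤ᵐ[μ] g) :
    lpNormE p μ f ≤ lpNormE p μ g := by
  unfold lpNormE
  split_ifs
  · exact essSup_mono_ae h
  · gcongr 1
    exact lintegral_mono_ae (h.mono fun _ hx => ENNReal.rpow_le_rpow hx ENNReal.toReal_nonneg)

theorem lpNormE_mul_const [MeasurableSpace α] (hp : 0 < p) {μ : Measure α} {f : α → ℝ≥0∞}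
    (hf : AEMeasurable f μ) (c : ℝ≥0∞) :
    lpNormE p μ (fun x => f x * c) = lpNormE p μ f * c := by
  unfold lpNormE
  split_ifs with h
  · simp_rw [mul_comm _ c]
    exact ENNReal.essSup_const_mul
  · have hp' : 0 < p.toReal := ENNReal.toReal_pos hp.ne' h
    simp_rw [ENNReal.mul_rpow_of_nonneg _ _ hp'.le, one_div]
    rw [lintegral_mul_const'' _ (hf.pow_const _), ENNReal.mul_rpow_of_nonneg _ _ (by positivity),
      ENNReal.rpow_rpow_inv hp'.ne']

theorem lpNormE_iUnion [MeasurableSpace α] [Countable ι] (p : ℝ≥0∞) (μ : Measure α)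
    {S : ι → Set α} (hS : ∀ i, MeasurableSet (S i)) (hd : Pairwise (Function.onFun Disjoint S))
    (f : α → ℝ≥0∞) :
    lpNormE p (μ.restrict (⋃ i, S i)) f = lqNorm p (fun i => lpNormE p (μ.restrict (S i)) f) := by
  by_cases hp : p = ∞
  · simp only [lpNormE, lqNorm, if_pos hp]
    refine le_antisymm (essSup_le_of_ae_le _ ?_) (iSup_le fun i => essSup_mono_measure' ?_)
    · refine (ae_restrict_iUnion_iff S _).mpr fun i => ?_
      filter_upwards [ENNReal.ae_le_essSup (μ := μ.restrict (S i)) f] with x hx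
      exact hx.trans (le_iSup (fun i => essSup f (μ.restrict (S i))) i)
    · exact Measure.restrict_mono (Set.subset_iUnion S i) le_rfl
  · simp only [lpNormE, lqNorm, if_neg hp, lintegral_iUnion hS hd]
    by_cases h0 : p.toReal = 0
    · simp [h0]
    · simp_rw [one_div, ENNReal.rpow_inv_rpow h0]

theorem lqNorm_eq_eLpNorm_count [MeasurableSpace ι] [MeasurableSingletonClass ι] (hq : 0 < q)
    (c : ι → ℝ≥0∞) : lqNorm q c = eLpNorm c q Measure.count := by
  rw [← lpNormE_eq_eLpNorm hq]
  by_cases h : q = ∞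
  · simp [lqNorm, lpNormE, h]
  · simp [lqNorm, lpNormE, h, lintegral_count]

theorem lqNorm_sum_le (hq : 0 < q) (s : Finset κ) (c : κ → ι → ℝ≥0∞) :
    lqNorm q (fun i => ∑ u ∈ s, c u i) ≤ LpAddConst q ^ s.card * ∑ u ∈ s, lqNorm q (c u) := by
  let _ : MeasurableSpace ι := ⊤
  simp_rw [lqNorm_eq_eLpNorm_count hq]
  rw [← Finset.sum_fn]
  exact eLpNorm_sum_le_LpAddConst s
    (fun u _ => (measurable_from_top (f := c u)).aestronglyMeasurable) q

theorem lqNorm_add_le (hq : 0 < q) (c d : ι → ℝ≥0∞) :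
    lqNorm q (fun i => c i + d i) ≤ LpAddConst q * (lqNorm q c + lqNorm q d) := by
  let _ : MeasurableSpace ι := ⊤
  simp_rw [lqNorm_eq_eLpNorm_count hq]
  exact eLpNorm_add_le' (measurable_from_top (f := c)).aestronglyMeasurable
    (measurable_from_top (f := d)).aestronglyMeasurable q

@[gcongr]
theorem lqNorm_mono {c d : ι → ℝ≥0∞} (h : ∀ i, c i ≤ d i) : lqNorm q c ≤ lqNorm q d := by
  unfold lqNorm
  split_ifs
  · exact iSup_mono h
  · gcongr with i
    exact h i

theorem lqNorm_const_mul (hq : 0 < q) (a : ℝ≥0∞) (c : ι → ℝ≥0∞) :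
    lqNorm q (fun i => a * c i) = a * lqNorm q c := by
  unfold lqNorm
  split_ifs with h
  · rw [ENNReal.mul_iSup]
  · have hq' : 0 < q.toReal := ENNReal.toReal_pos hq.ne' h
    simp_rw [ENNReal.mul_rpow_of_nonneg _ _ hq'.le, ENNReal.tsum_mul_left, one_div]
    rw [ENNReal.mul_rpow_of_nonneg _ _ (by positivity), ENNReal.rpow_rpow_inv hq'.ne']

theorem lqNorm_comp_le_of_injective (c : ι → ℝ≥0∞) {e : κ → ι} (he : Function.Injective e) :
    lqNorm q (fun i => c (e i)) ≤ lqNorm q c := by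
  unfold lqNorm
  split_ifs
  · exact iSup_comp_le c e
  · gcongr
    exact ENNReal.tsum_comp_le_tsum_of_injective he fun i => c i ^ q.toReal

theorem le_lqNorm (hq : 0 < q) (c : ι → ℝ≥0∞) (i : ι) : c i ≤ lqNorm q c := by
  unfold lqNorm
  split_ifs with h
  · exact le_iSup c i
  · rw [one_div, ENNReal.le_rpow_inv_iff (ENNReal.toReal_pos hq.ne' h)]
    exact ENNReal.le_tsum i

theorem lqNorm_lt_top_of_support_subset (hq : 0 < q) {c : ι → ℝ≥0∞} (hc : ∀ i, c i < ∞)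
    {s : Finset ι} (hs : c.support ⊆ s) : lqNorm q c < ∞ := by
  have hs' : ∀ i ∉ s, c i = 0 := fun i hi => Function.notMem_support.1 fun h => hi (hs h)
  unfold lqNorm
  split_ifs with h
  · refine lt_of_le_of_lt (iSup_le fun i => ?_) (ENNReal.sum_lt_top.2 fun i (_ : i ∈ s) => hc i)
    by_cases hi : i ∈ s
    · exact Finset.single_le_sum (fun _ _ => zero_le) hi
    · simp [hs' i hi]
  · have hq' : 0 < q.toReal := ENNReal.toReal_pos hq.ne' h
    rw [tsum_eq_sum fun i hi => by rw [hs' i hi, ENNReal.zero_rpow_of_pos hq']]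
    have : ∑ i ∈ s, c i ^ q.toReal < ∞ :=
      ENNReal.sum_lt_top.2 fun i _ => ENNReal.rpow_lt_top_of_nonneg hq'.le (hc i).ne
    exact ENNReal.rpow_lt_top_of_nonneg (by positivity) this.ne

theorem lqNorm_le_of_forall_indicator_Iio_le (hq : 0 < q) {a : ℕ → ℝ≥0∞} {B : ℝ≥0∞}
    (h : ∀ M, lqNorm q ((Set.Iio M).indicator a) ≤ B) : lqNorm q a ≤ B := by
  by_cases hqt : q = ∞
  · rw [lqNorm, if_pos hqt]
    refine iSup_le fun k => ?_
    simpa using (le_lqNorm hq ((Set.Iio (k + 1)).indicator a) k).trans (h (k + 1))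
  · have hq' : 0 < q.toReal := ENNReal.toReal_pos hq.ne' hqt
    simp only [lqNorm, if_neg hqt, one_div, ENNReal.rpow_inv_le_iff hq'] at h ⊢
    rw [ENNReal.tsum_eq_iSup_nat]
    refine iSup_le fun M => (le_of_eq ?_).trans
      ((ENNReal.sum_le_tsum (Finset.range M)).trans (h M))
    exact Finset.sum_congr rfl fun k hk => by
      rw [Set.indicator_of_mem (Set.mem_Iio.2 (Finset.mem_range.1 hk))]

theorem lqNorm_sum_fiber_le (hq : 0 < q) (g : ι → κ) {T : ι → ℝ≥0∞} {S : κ → ℝ≥0∞}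
    (B : κ → ℝ≥0∞) {K : ℝ≥0∞}
    (h : ∀ j, lqNorm q (fun i : {i // g i = j} => T i) ≤ K * S j) :
    lqNorm q (fun i => T i * B (g i)) ≤ K * lqNorm q (fun j => S j * B j) := by
  rw [← lqNorm_const_mul hq]
  by_cases hqt : q = ∞
  · simp only [lqNorm, if_pos hqt]
    refine iSup_le fun i => le_trans ?_ (le_iSup (fun j => K * (S j * B j)) (g i))
    rw [← mul_assoc]
    gcongr
    exact (le_lqNorm hq (fun i' : {i' // g i' = g i} => T i') ⟨i, rfl⟩).trans (h (g i))
  · have hq' : 0 < q.toReal := ENNReal.toReal_pos hq.ne' hqt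
    simp only [lqNorm, if_neg hqt, one_div, ENNReal.rpow_inv_le_iff hq'] at h ⊢
    rw [ENNReal.rpow_inv_rpow hq'.ne', ← (Equiv.sigmaFiberEquiv g).tsum_eq, ENNReal.tsum_sigma']
    refine ENNReal.tsum_le_tsum fun j => ?_
    calc ∑' i : {i // g i = j}, (T i * B (g i)) ^ q.toReal
        = (∑' i : {i // g i = j}, T i ^ q.toReal) * B j ^ q.toReal := by
          rw [← ENNReal.tsum_mul_right]
          exact tsum_congr fun i => by rw [ENNReal.mul_rpow_of_nonneg _ _ hq'.le, i.2]
      _ ≤ (K * S j) ^ q.toReal * B j ^ q.toReal := mul_le_mul_left (h j) _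
      _ = (K * (S j * B j)) ^ q.toReal := by
          rw [← ENNReal.mul_rpow_of_nonneg _ _ hq'.le, mul_assoc]

end Quasinorms

section Absorption

variable {q : ℝ≥0∞}

/-- The sequence `b` delayed by `N` steps and continued by zero, as in the recursive estimates
that bound the level `k` by the level `k - N`. -/
def delay (N : ℕ) (b : ℕ → ℝ≥0∞) (k : ℕ) : ℝ≥0∞ := if N ≤ k then b (k - N) else 0

theorem delay_add_left (N : ℕ) (b : ℕ → ℝ≥0∞) (k : ℕ) : delay N b (N + k) = b k := by
  simp [delay]

theorem lqNorm_delay_le (hq : 0 < q) (N : ℕ) (b : ℕ → ℝ≥0∞) :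
    lqNorm q (delay N b) ≤ lqNorm q b := by
  by_cases hqt : q = ∞
  · simp only [lqNorm, if_pos hqt]
    refine iSup_le fun k => ?_
    rw [delay]
    split_ifs
    · exact le_iSup b _
    · exact zero_le
  · have hq' : 0 < q.toReal := ENNReal.toReal_pos hq.ne' hqt
    simp only [lqNorm, if_neg hqt]
    rw [← (add_right_injective N).tsum_eq (f := fun k => delay N b k ^ q.toReal)]
    · simp_rw [delay_add_left, le_rfl]
    · intro k hk
      by_contra hNk
      have : ¬N ≤ k := fun h => hNk ⟨k - N, Nat.add_sub_cancel' h⟩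
      simp [delay, this, hq'] at hk

theorem lt_top_of_le_mul_delay_add {a c : ℕ → ℝ≥0∞} {θ : ℝ≥0∞} (hθ : θ < ∞) {N : ℕ}
    (hN : 0 < N) (hc : ∀ k, c k < ∞) (h : ∀ k, a k ≤ θ * delay N a k + c k) (k : ℕ) :
    a k < ∞ := by
  induction k using Nat.strong_induction_on with
  | _ k ih =>
    refine (h k).trans_lt (ENNReal.add_lt_top.2 ⟨ENNReal.mul_lt_top hθ ?_, hc k⟩)
    rw [delay]
    split_ifs with hk
    · exact ih _ (by omega)
    · exact zero_lt_top

theorem le_two_mul_of_le_half_mul_add {x y : ℝ≥0∞} (hx : x ≠ ∞) (h : x ≤ 2⁻¹ * x + y) :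
    x ≤ 2 * y := by
  have hhalf : 2⁻¹ * x + 2⁻¹ * x = x := by rw [← add_mul, ENNReal.inv_two_add_inv_two, one_mul]
  have hy : 2⁻¹ * x ≤ y :=
    (ENNReal.add_le_add_iff_left (by finiteness)).1 (hhalf.trans_le h)
  calc x = 2⁻¹ * x + 2⁻¹ * x := hhalf.symm
    _ ≤ 2 * y := by rw [two_mul]; gcongr

theorem lqNorm_le_of_le_mul_delay_add (hq : 0 < q) {a c : ℕ → ℝ≥0∞} {θ : ℝ≥0∞} {N : ℕ}
    (hN : 0 < N) (hθ : LpAddConst q * θ ≤ 2⁻¹) (h : ∀ k, a k ≤ θ * delay N a k + c k) :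
    lqNorm q a ≤ 2 * (LpAddConst q * lqNorm q c) := by
  have hK : LpAddConst q ≠ 0 := (one_pos.trans_le (one_le_LpAddConst q)).ne'
  rcases eq_top_or_lt_top (lqNorm q c) with hc | hc
  · simp [hc, ENNReal.mul_top, hK]
  have hθ_top : θ < ∞ := by
    refine ((le_mul_of_one_le_left' (one_le_LpAddConst q)).trans hθ).trans_lt ?_
    simp
  have ha := lt_top_of_le_mul_delay_add hθ_top hN (fun k => (le_lqNorm hq c k).trans_lt hc) h
  -- Truncation makes the quasinorm finite, so that it can be absorbed by the left-hand side.
  refine lqNorm_le_of_forall_indicator_Iio_le hq fun M => ?_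
  set b := (Set.Iio M).indicator a with hb
  have hb_top : lqNorm q b < ∞ := by
    refine lqNorm_lt_top_of_support_subset hq (s := Finset.range M) (fun k => ?_) ?_
    · exact (Set.indicator_le_self' (fun _ _ => zero_le) k).trans_lt (ha k)
    · simp [hb, Set.support_indicator]
  have hstep : ∀ k, b k ≤ θ * delay N b k + c k := by
    refine Set.indicator_le fun k hk => (h k).trans_eq ?_
    simp only [delay, hb]
    split_ifs with hNk
    · rw [Set.indicator_of_mem (Set.mem_Iio.2 ((Nat.sub_le k N).trans_lt hk))]
    · rfl
  refine le_two_mul_of_le_half_mul_add hb_top.ne ?_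
  calc lqNorm q b ≤ LpAddConst q * (lqNorm q (fun k => θ * delay N b k) + lqNorm q c) :=
        (lqNorm_mono hstep).trans (lqNorm_add_le hq _ _)
    _ ≤ LpAddConst q * (θ * lqNorm q b + lqNorm q c) := by
        rw [lqNorm_const_mul hq]
        gcongr _ * (_ * ?_ + _)
        exact lqNorm_delay_le hq N b
    _ ≤ 2⁻¹ * lqNorm q b + LpAddConst q * lqNorm q c := by
        rw [mul_add, ← mul_assoc]
        gcongr

end Absorption

/-! ### Identities for iterated differences -/

section IteratedDifferences

open Finset

theorem fwdDiff_iter_add_self {M G : Type*} [AddCommMonoid M] [AddCommGroup G] (l : ℕ) (h : M)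
    (φ : M → G) (x : M) : (fwdDiff (h + h))^[l] φ x =
      ∑ j ∈ range (l + 1), (2 ^ (l - j) * l.choose j) • (fwdDiff h)^[l + j] φ x := by
  set D := fwdDiff_aux.fwdDiffₗ M G h
  have hdouble : fwdDiff_aux.fwdDiffₗ M G (h + h) = D * (D + 2) := by
    ext φ x
    simp only [fwdDiff_aux.fwdDiffₗ_apply, fwdDiff, Module.End.mul_apply, LinearMap.add_apply,
      Module.End.ofNat_apply, Pi.add_apply, Pi.smul_apply, ← add_assoc, D]
    abel
  have hcomm : Commute D (2 : Module.End ℤ (M → G)) := Commute.ofNat_right D 2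
  rw [← fwdDiff_aux.coe_fwdDiffₗ_pow, hdouble, ((Commute.refl D).add_right hcomm).mul_pow,
    hcomm.add_pow, mul_sum, LinearMap.sum_apply, Finset.sum_apply]
  refine sum_congr rfl fun j _ => ?_
  rw [← mul_assoc, ← mul_assoc, ← pow_add, mul_assoc, ← Nat.cast_ofNat, ← Nat.cast_pow,
    ← Nat.cast_mul, ← (Nat.cast_commute _ _).eq, Module.End.mul_apply, Module.End.natCast_apply,
    fwdDiff_aux.coe_fwdDiffₗ_pow, Pi.smul_apply]

variable {E : Type*} [AddCommGroup E] [Module ℝ E]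

theorem fwdDiff_iter_eq_sum (l : ℕ) (h : E) (φ : E → ℝ) (x : E) : (fwdDiff h)^[l] φ x =
    ∑ j ∈ range (l + 1), (l.choose j * (-1) ^ (l + j)) * φ (x + (j : ℝ) • h) := by
  rw [fwdDiff_iter_eq_sum_shift]
  refine sum_congr rfl fun j hj => ?_
  obtain ⟨d, rfl⟩ := Nat.exists_eq_add_of_le (Nat.lt_succ_iff.1 (mem_range.1 hj))
  have : (-1 : ℝ) ^ (j + d + j) = (-1) ^ d := by
    rw [show j + d + j = 2 * j + d by ring, pow_add, pow_mul]
    simp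
  rw [this, Nat.cast_smul_eq_nsmul, Nat.add_sub_cancel_left, zsmul_eq_mul]
  push_cast
  ring

theorem fwdDiff_iter_eq_sum_powerset (l : ℕ) (h : E) (φ : E → ℝ) (x : E) :
    (fwdDiff h)^[l] φ x = (-1) ^ l *
      ∑ S ∈ (range l).powerset, (-1) ^ #S * φ (x + (#S : ℝ) • h) := by
  rw [sum_powerset_apply_card (fun j => (-1 : ℝ) ^ j * φ (x + (j : ℝ) • h)), card_range, mul_sum,
    fwdDiff_iter_eq_sum]
  refine sum_congr rfl fun j _ => ?_
  rw [nsmul_eq_mul, pow_add]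
  ring

/- In the expansion of the left-hand side, the `(j + 1)`-st shift of the difference cancels the
`w j` summand, so the terms of `S` and `insert j S` have opposite signs and only `j = 0` remains. -/
theorem kemperman_identity (l : ℕ) (w : ℕ → E) (φ : E → ℝ) (x : E) :
    ∑ S ∈ (range l).powerset, (-1) ^ #S *
        (fwdDiff (-∑ i ∈ S, ((i : ℝ) + 1)⁻¹ • w i))^[l] φ (x + ∑ i ∈ S, w i) =
      (-1) ^ l * ∑ S ∈ (range l).powerset, (-1) ^ #S * φ (x + ∑ i ∈ S, w i) := by
  simp_rw [fwdDiff_iter_eq_sum, mul_sum]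
  rw [sum_comm, sum_range_succ', sum_eq_zero, zero_add]
  · refine sum_congr rfl fun S _ => ?_
    simp
    ring
  · intro j hj
    rw [← insert_erase hj, sum_powerset_insert (notMem_erase _ _), ← sum_add_distrib]
    refine sum_eq_zero fun S hS => ?_
    have hjS : j ∉ S := fun h => notMem_erase j _ (mem_powerset.1 hS h)
    have hcancel : x + (w j + ∑ i ∈ S, w i) + ((j + 1 : ℕ) : ℝ) • -(((j : ℝ) + 1)⁻¹ • w j
        + ∑ i ∈ S, ((i : ℝ) + 1)⁻¹ • w i) =
        x + ∑ i ∈ S, w i + ((j + 1 : ℕ) : ℝ) • -(∑ i ∈ S, ((i : ℝ) + 1)⁻¹ • w i) := by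
      have hne : ((j : ℝ) + 1) ≠ 0 := by positivity
      rw [neg_add, smul_add, smul_neg, smul_smul]
      push_cast
      rw [mul_inv_cancel₀ hne, one_smul]
      abel
    rw [card_insert_of_notMem hjS, sum_insert hjS, sum_insert hjS, hcancel]
    ring

/- Kemperman's identity for the increments `h, …, h, v`. -/
theorem fwdDiff_iter_add_sub_fwdDiff_iter (l : ℕ) (h v : E) (φ : E → ℝ) (x : E) :
    (fwdDiff h)^[l] φ (x + v) - (fwdDiff h)^[l] φ x =
      ∑ S ∈ (range l).powerset, ((-1) ^ #S *
          (fwdDiff (-((∑ i ∈ S, ((i : ℝ) + 1)⁻¹) • h)))^[l + 1] φ (x + (#S : ℝ) • h) -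
        (-1) ^ #S * (fwdDiff (-((∑ i ∈ S, ((i : ℝ) + 1)⁻¹) • h + ((l : ℝ) + 1)⁻¹ • v)))^[l + 1] φ
          (x + (#S : ℝ) • h + v)) := by
  have hK := kemperman_identity (l + 1) (fun i => if i = l then v else h) φ x
  rw [range_add_one, sum_powerset_insert notMem_range_self,
    sum_powerset_insert notMem_range_self, ← sum_add_distrib, ← sum_add_distrib] at hK
  have hlS : ∀ S ∈ (range l).powerset, l ∉ S := fun S hS hl =>
    notMem_range_self (mem_powerset.1 hS hl)
  have hw : ∀ S ∈ (range l).powerset, ∑ i ∈ S, (if i = l then v else h) = (#S : ℝ) • h := by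
    intro S hS
    rw [sum_congr rfl fun i hi => if_neg (ne_of_mem_of_not_mem hi (hlS S hS)), sum_const,
      Nat.cast_smul_eq_nsmul]
  have hw' : ∀ S ∈ (range l).powerset, ∑ i ∈ S, ((i : ℝ) + 1)⁻¹ • (if i = l then v else h) =
      (∑ i ∈ S, ((i : ℝ) + 1)⁻¹) • h := by
    intro S hS
    rw [sum_smul]
    exact sum_congr rfl fun i hi => by rw [if_neg (ne_of_mem_of_not_mem hi (hlS S hS))]
  calc _ = (-1) ^ (l + 1) * ∑ S ∈ (range l).powerset, ((-1) ^ #S * φ (x + (#S : ℝ) • h) -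
        (-1) ^ #S * φ (x + v + (#S : ℝ) • h)) := by
        rw [fwdDiff_iter_eq_sum_powerset, fwdDiff_iter_eq_sum_powerset, sum_sub_distrib]
        ring
    _ = _ := by
        rw [mul_sum] at hK ⊢
        trans
        · refine Eq.trans (sum_congr rfl fun S hS => ?_) hK.symm
          rw [card_insert_of_notMem (hlS S hS), sum_insert (hlS S hS), hw S hS, if_pos rfl,
            ← add_assoc]
          ring
        · refine sum_congr rfl fun S hS => ?_
          rw [card_insert_of_notMem (hlS S hS), sum_insert (hlS S hS), sum_insert (hlS S hS),
            hw S hS, hw' S hS, if_pos rfl, add_comm v, ← add_assoc, add_comm (_ • v)]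
          ring

/-- `Δ^l(h) φ(x)` as a function of the pair `(h, x)`. -/
def pairDiff (l : ℕ) (φ : E → ℝ) (v : E × E) : ℝ := (fwdDiff v.1)^[l] φ v.2

/-- The action of real `2 × 2` matrices on pairs `(h, x)` of an increment and a base point. -/
def blockMap (E : Type*) [AddCommGroup E] [Module ℝ E] :
    Matrix (Fin 2) (Fin 2) ℝ →* Module.End ℝ (E × E) where
  toFun A :=
    { toFun := fun v => (A 0 0 • v.1 + A 0 1 • v.2, A 1 0 • v.1 + A 1 1 • v.2)
      map_add' := fun v w => Prod.ext
        (by simp only [Prod.fst_add, Prod.snd_add]; module)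
        (by simp only [Prod.fst_add, Prod.snd_add]; module)
      map_smul' := fun c v => Prod.ext
        (by simp only [Prod.smul_fst, Prod.smul_snd, RingHom.id_apply]; module)
        (by simp only [Prod.smul_fst, Prod.smul_snd, RingHom.id_apply]; module) }
  map_one' := LinearMap.ext fun v => by simp
  map_mul' A B := LinearMap.ext fun v => by
    simp only [Matrix.mul_apply, Fin.sum_univ_two, LinearMap.coe_mk, AddHom.coe_mk,
      Module.End.mul_apply]
    refine Prod.ext ?_ ?_ <;> dsimp only <;> module

theorem blockMap_apply (A : Matrix (Fin 2) (Fin 2) ℝ) (v : E × E) : blockMap E A v =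
    (A 0 0 • v.1 + A 0 1 • v.2, A 1 0 • v.1 + A 1 1 • v.2) := rfl

/-- The difference of order `l` after the linear change of variables `blockMap E A`. -/
def blockDiff (l : ℕ) (A : Matrix (Fin 2) (Fin 2) ℝ) (φ : E → ℝ) (v : E × E) : ℝ :=
  pairDiff l φ (blockMap E A v)

theorem blockDiff_blockMap (l : ℕ) (A B : Matrix (Fin 2) (Fin 2) ℝ) (φ : E → ℝ) (v : E × E) :
    blockDiff l A φ (blockMap E B v) = blockDiff l (A * B) φ v := by
  rw [blockDiff, blockDiff, map_mul, Module.End.mul_apply]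

theorem blockDiff_one (l : ℕ) (φ : E → ℝ) : blockDiff l 1 φ = pairDiff l φ := by
  funext v
  rw [blockDiff, map_one, Module.End.one_apply]

/-- The operators which are linear combinations of differences of order `l`, each after an
invertible change of variables; their `L_r` quasinorms are controlled by `pairDiff l`. -/
def diffSpan (E : Type*) [AddCommGroup E] [Module ℝ E] (l : ℕ) :
    Submodule ℝ ((E → ℝ) → E × E → ℝ) :=
  Submodule.span ℝ (blockDiff l '' {A | IsUnit A})

theorem blockDiff_mem_diffSpan {l : ℕ} {A : Matrix (Fin 2) (Fin 2) ℝ} (hA : IsUnit A) :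
    blockDiff l A ∈ diffSpan E l :=
  Submodule.subset_span ⟨A, hA, rfl⟩

theorem comp_blockMap_mem_diffSpan {l : ℕ} {B : Matrix (Fin 2) (Fin 2) ℝ} (hB : IsUnit B)
    {G : (E → ℝ) → E × E → ℝ} (hG : G ∈ diffSpan E l) :
    (fun φ v => G φ (blockMap E B v)) ∈ diffSpan E l := by
  induction hG using Submodule.span_induction with
  | mem G hG =>
    obtain ⟨A, hA, rfl⟩ := hG
    simp only [blockDiff_blockMap]
    exact blockDiff_mem_diffSpan (IsUnit.mul hA hB)
  | zero => exact Submodule.zero_mem _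
  | add G₁ G₂ _ _ h₁ h₂ => exact Submodule.add_mem _ h₁ h₂
  | smul c G _ h => exact Submodule.smul_mem _ c h

theorem blockDiff_succ (l : ℕ) (A : Matrix (Fin 2) (Fin 2) ℝ) :
    blockDiff (E := E) (l + 1) A = blockDiff l (!![1, 0; 1, 1] * A) - blockDiff l A := by
  funext φ v
  rw [Pi.sub_apply, Pi.sub_apply, ← blockDiff_blockMap]
  simp only [blockDiff, pairDiff, blockMap_apply, Function.iterate_succ_apply', fwdDiff]
  simp [add_comm]

theorem diffSpan_antitone : Antitone (diffSpan E) := by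
  refine antitone_nat_of_succ_le fun l => Submodule.span_le.2 ?_
  rintro _ ⟨A, hA, rfl⟩
  have hshear : IsUnit (!![1, 0; 1, 1] : Matrix (Fin 2) (Fin 2) ℝ) := by
    simp [Matrix.isUnit_iff_isUnit_det, Matrix.det_fin_two_of]
  rw [blockDiff_succ]
  exact Submodule.sub_mem _ (blockDiff_mem_diffSpan (hshear.mul hA)) (blockDiff_mem_diffSpan hA)

theorem blockDiff_one_sub_double_mem_diffSpan (l : ℕ) :
    blockDiff l 1 - (2⁻¹ : ℝ) ^ l • blockDiff l !![2, 0; 0, 1] ∈ diffSpan E (l + 1) := by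
  have hdouble : blockDiff (E := E) l !![2, 0; 0, 1] = (2 : ℝ) ^ l • blockDiff l 1 +
      ∑ j ∈ range l, (2 ^ (l - (j + 1)) * l.choose (j + 1)) • blockDiff (l + (j + 1)) 1 := by
    funext φ v
    have h := fwdDiff_iter_add_self l v.1 φ v.2
    rw [sum_range_succ'] at h
    simp only [blockDiff, pairDiff, blockMap_apply, Pi.add_apply, Finset.sum_apply, Pi.smul_apply]
    simpa [two_smul, add_comm] using h
  have hpow : (2⁻¹ : ℝ) ^ l * 2 ^ l = 1 := by rw [← mul_pow]; norm_num
  rw [hdouble, smul_add, smul_smul, hpow, one_smul, sub_add_cancel_left]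
  refine Submodule.neg_mem _ (Submodule.smul_mem _ _ (Submodule.sum_mem _ fun j _ =>
    Submodule.smul_of_tower_mem _ _ ?_))
  exact diffSpan_antitone (by omega) (blockDiff_mem_diffSpan isUnit_one)

theorem blockDiff_one_sub_dilation_mem_diffSpan (l N : ℕ) :
    blockDiff l 1 - ((2⁻¹ : ℝ) ^ l) ^ N • blockDiff l !![2 ^ N, 0; 0, 1] ∈
      diffSpan E (l + 1) := by
  induction N with
  | zero => simp [← Matrix.one_fin_two]
  | succ N ih =>
    have hN : IsUnit (!![2 ^ N, 0; 0, 1] : Matrix (Fin 2) (Fin 2) ℝ) := by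
      simp [Matrix.isUnit_iff_isUnit_det, Matrix.det_fin_two_of]
    have hstep := comp_blockMap_mem_diffSpan hN (blockDiff_one_sub_double_mem_diffSpan (E := E) l)
    convert Submodule.add_mem _ ih (Submodule.smul_mem _ (((2⁻¹ : ℝ) ^ l) ^ N) hstep) using 1
    funext φ v
    simp only [Pi.sub_apply, Pi.add_apply, Pi.smul_apply, blockDiff_blockMap, smul_eq_mul, one_mul]
    rw [show (!![2, 0; 0, 1] * !![2 ^ N, 0; 0, 1] : Matrix (Fin 2) (Fin 2) ℝ) =
      !![2 ^ (N + 1), 0; 0, 1] by simp [pow_succ']]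
    ring

theorem blockDiff_shear_sub_dilation_eq_sum (l : ℕ) (D : ℝ) :
    blockDiff (E := E) l !![D, 0; D, D] - blockDiff l !![D, 0; 0, 1] =
      ∑ S ∈ (range l).powerset, ((-1 : ℝ) ^ #S •
          blockDiff (l + 1) !![-(∑ i ∈ S, ((i : ℝ) + 1)⁻¹) * D, 0; #S * D, 1] -
        (-1 : ℝ) ^ #S • blockDiff (l + 1)
          !![-(∑ i ∈ S, ((i : ℝ) + 1)⁻¹ + ((l : ℝ) + 1)⁻¹) * D, -((l : ℝ) + 1)⁻¹ * (D - 1);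
            (#S + 1) * D, D]) := by
  funext φ v
  have h := fwdDiff_iter_add_sub_fwdDiff_iter l (D • v.1) (D • v.1 + (D - 1) • v.2) φ v.2
  simp only [Pi.sub_apply, Finset.sum_apply, Pi.smul_apply, blockDiff, smul_eq_mul]
  refine Eq.trans ?_ (h.trans (sum_congr rfl fun S _ => ?_))
  · change _ = pairDiff l φ (_, _) - pairDiff l φ (_, _)
    congr 2 <;> refine Prod.ext ?_ ?_ <;> simp [blockMap_apply]
    module
  · change (-1) ^ #S * pairDiff (l + 1) φ (_, _) - (-1) ^ #S * pairDiff (l + 1) φ (_, _) = _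
    congr 3 <;> refine Prod.ext ?_ ?_ <;> simp [blockMap_apply] <;> module

theorem blockDiff_shear_sub_dilation_mem_diffSpan (l : ℕ) {D : ℝ} (hD : 0 < D) :
    blockDiff l !![D, 0; D, D] - blockDiff l !![D, 0; 0, 1] ∈ diffSpan E (l + 1) := by
  rw [blockDiff_shear_sub_dilation_eq_sum]
  set b : ℝ := ((l : ℝ) + 1)⁻¹
  have hb : 0 < b := by positivity
  refine Submodule.sum_mem _ fun S hS => Submodule.sub_mem _ (Submodule.smul_mem _ _ ?_)
    (Submodule.smul_mem _ _ (blockDiff_mem_diffSpan ?_))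
  · rcases S.eq_empty_or_nonempty with rfl | hne
    · convert Submodule.zero_mem _
      funext φ v
      simp [blockDiff, pairDiff, blockMap_apply, Function.iterate_succ_apply', fwdDiff]
    · have ha : 0 < ∑ i ∈ S, ((i : ℝ) + 1)⁻¹ := sum_pos (fun i _ => by positivity) hne
      refine blockDiff_mem_diffSpan ?_
      simp [Matrix.isUnit_iff_isUnit_det, Matrix.det_fin_two_of, ha.ne', hD.ne']
  · set a : ℝ := ∑ i ∈ S, ((i : ℝ) + 1)⁻¹
    have ha : 0 ≤ a - #S * b := by
      rw [sub_nonneg, ← nsmul_eq_mul]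
      refine card_nsmul_le_sum _ _ _ fun i hi => ?_
      have : (i : ℝ) ≤ l := by exact_mod_cast (mem_range.1 (mem_powerset.1 hS hi)).le
      dsimp only [b]
      gcongr
    have hdet : -(a + b) * D * D - -b * (D - 1) * ((#S + 1) * D) =
        -(D * ((a - #S * b) * D + b * (#S + 1))) := by ring
    rw [Matrix.isUnit_iff_isUnit_det, Matrix.det_fin_two_of, hdet, isUnit_iff_ne_zero, neg_ne_zero]
    positivity

theorem blockDiff_one_sub_expansion_mem_diffSpan (l N : ℕ) :
    blockDiff l 1 - ((2⁻¹ : ℝ) ^ l) ^ N • blockDiff l ((2 : ℝ) ^ N • !![1, 0; 1, 1]) ∈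
      diffSpan E (l + 1) := by
  have hshear := Submodule.smul_mem _ (((2⁻¹ : ℝ) ^ l) ^ N)
    (blockDiff_shear_sub_dilation_mem_diffSpan (E := E) l (D := 2 ^ N) (by positivity))
  convert Submodule.sub_mem _ (blockDiff_one_sub_dilation_mem_diffSpan l N) hshear using 1
  simp [smul_sub]

theorem det_blockMap_ne_zero {A : Matrix (Fin 2) (Fin 2) ℝ} (hA : IsUnit A) :
    LinearMap.det (blockMap E A) ≠ 0 :=
  ((hA.map (blockMap E)).map LinearMap.det).ne_zero

end IteratedDifferences

/-! ### Differences and linear changes of variables -/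

section ChangeOfVariables

variable {E F : Type*} [NormedAddCommGroup E] [NormedSpace ℝ E] [FiniteDimensional ℝ E]
  [MeasurableSpace E] [BorelSpace E] [NormedAddCommGroup F]

theorem eLpNorm_comp_linearMap_restrict_le (μ : Measure E) [μ.IsAddHaarMeasure]
    {L : E →ₗ[ℝ] E} (hL : LinearMap.det L ≠ 0) {g : E → F} (hg : AEStronglyMeasurable g μ)
    {B B' : Set E} (hB' : MeasurableSet B') (hBB' : Set.MapsTo L B B') (r : ℝ≥0∞) :
    eLpNorm (g ∘ L) r (μ.restrict B) ≤
      ENNReal.ofReal |(LinearMap.det L)⁻¹| ^ (1 / r).toReal * eLpNorm g r (μ.restrict B') := by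
  have hLm : Measurable L := (LinearMap.continuous_of_finiteDimensional L).measurable
  have hmap : (μ.restrict (L ⁻¹' B')).map L =
      ENNReal.ofReal |(LinearMap.det L)⁻¹| • μ.restrict B' := by
    rw [← Measure.restrict_map hLm hB', Measure.map_linearMap_addHaar_eq_smul_addHaar μ hL,
      Measure.restrict_smul]
  calc eLpNorm (g ∘ L) r (μ.restrict B)
      ≤ eLpNorm (g ∘ L) r (μ.restrict (L ⁻¹' B')) :=
        eLpNorm_mono_measure _ (Measure.restrict_mono hBB' le_rfl)
    _ = eLpNorm g r ((μ.restrict (L ⁻¹' B')).map L) := by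
        refine (eLpNorm_map_measure ?_ hLm.aemeasurable).symm
        rw [hmap]
        exact hg.restrict.smul_measure _
    _ ≤ _ := by
        rw [hmap]
        exact eLpNorm_smul_measure_le _ _ _ _

end ChangeOfVariables

section Measurability

variable {E : Type*} [AddCommGroup E] [Module ℝ E] [MeasurableSpace E] [MeasurableAdd₂ E]
  [MeasurableConstSMul ℝ E]

theorem measurable_pairDiff (l : ℕ) {φ : E → ℝ} (hφ : Measurable φ) :
    Measurable (pairDiff l φ) := by
  unfold pairDiff
  simp only [fwdDiff_iter_eq_sum]
  fun_prop

theorem measurable_blockMap (A : Matrix (Fin 2) (Fin 2) ℝ) : Measurable (blockMap E A) := by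
  simp only [funext (blockMap_apply A)]
  fun_prop

theorem measurable_of_mem_diffSpan {l : ℕ} {G : (E → ℝ) → E × E → ℝ} (hG : G ∈ diffSpan E l)
    {φ : E → ℝ} (hφ : Measurable φ) : Measurable (G φ) := by
  induction hG using Submodule.span_induction with
  | mem G hG =>
    obtain ⟨A, -, rfl⟩ := hG
    exact (measurable_pairDiff l hφ).comp (measurable_blockMap A)
  | zero => exact measurable_const
  | add G₁ G₂ _ _ h₁ h₂ => exact h₁.add h₂
  | smul c G _ h => exact h.const_smul c

end Measurability

section DiffSpanBound

variable {E : Type*} [NormedAddCommGroup E] [NormedSpace ℝ E] [FiniteDimensional ℝ E]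
  [MeasurableSpace E] [BorelSpace E]

theorem exists_eLpNorm_le_of_mem_diffSpan (μ : Measure E) [μ.IsAddHaarMeasure] {l : ℕ}
    {G : (E → ℝ) → E × E → ℝ} (hG : G ∈ diffSpan E l) (r : ℝ≥0∞) :
    ∃ C < ∞, ∃ ρ₀ : ℝ, ∀ ρ ≥ ρ₀, ∀ φ : E → ℝ, Measurable φ → ∀ s > 0,
      eLpNorm (G φ) r ((μ.prod μ).restrict (Metric.ball 0 s)) ≤
        C * eLpNorm (pairDiff l φ) r ((μ.prod μ).restrict (Metric.ball 0 (ρ * s))) := by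
  have := FiniteDimensional.proper_real E
  induction hG using Submodule.span_induction with
  | mem G hG =>
    obtain ⟨A, hA, rfl⟩ := hG
    refine ⟨_, ENNReal.rpow_lt_top_of_nonneg ENNReal.toReal_nonneg ENNReal.ofReal_ne_top,
      ‖LinearMap.toContinuousLinearMap (blockMap E A)‖ + 1, fun ρ hρ φ hφ s hs =>
      eLpNorm_comp_linearMap_restrict_le _ (det_blockMap_ne_zero hA)
        (measurable_pairDiff l hφ).aestronglyMeasurable Metric.isOpen_ball.measurableSet ?_ r⟩
    intro v hv
    rw [mem_ball_zero_iff] at hv ⊢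
    calc ‖blockMap E A v‖ ≤ ‖LinearMap.toContinuousLinearMap (blockMap E A)‖ * ‖v‖ :=
          (LinearMap.toContinuousLinearMap (blockMap E A)).le_opNorm v
      _ ≤ ‖LinearMap.toContinuousLinearMap (blockMap E A)‖ * s := by gcongr
      _ < ρ * s := by
          gcongr
          linarith
  | zero => exact ⟨0, zero_lt_top, 0, fun ρ _ φ _ s _ => by simp⟩
  | add G₁ G₂ hG₁ hG₂ h₁ h₂ =>
    obtain ⟨C₁, hC₁, ρ₁, h₁⟩ := h₁
    obtain ⟨C₂, hC₂, ρ₂, h₂⟩ := h₂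
    refine ⟨LpAddConst r * (C₁ + C₂), mul_lt_top (LpAddConst_lt_top r) (add_lt_top.2 ⟨hC₁, hC₂⟩),
      max ρ₁ ρ₂, fun ρ hρ φ hφ s hs => ?_⟩
    refine (eLpNorm_add_le' (measurable_of_mem_diffSpan hG₁ hφ).aestronglyMeasurable
      (measurable_of_mem_diffSpan hG₂ hφ).aestronglyMeasurable r).trans ?_
    rw [mul_assoc, add_mul]
    gcongr
    · exact h₁ ρ (le_of_max_le_left hρ) φ hφ s hs
    · exact h₂ ρ (le_of_max_le_right hρ) φ hφ s hs
  | smul c G _ h =>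
    obtain ⟨C, hC, ρ₀, h⟩ := h
    refine ⟨‖c‖ₑ * C, mul_lt_top enorm_lt_top hC, ρ₀, fun ρ hρ φ hφ s hs => ?_⟩
    rw [mul_assoc]
    exact (eLpNorm_const_smul_le (c := c) (f := G φ)).trans (mul_le_mul_right (h ρ hρ φ hφ s hs) _)

end DiffSpanBound

/-! ### Local estimates for differences on cubes -/

section Cubes

variable {n : ℕ}

theorem openCube_mono (x : Rn n) : Monotone (openCube x) :=
  fun _ _ h _ hy i => (hy i).trans_le h

theorem openCube_eq_ball (x : Rn n) {s : ℝ} (hs : 0 < s) : openCube x s = Metric.ball x s := by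
  ext y
  simp [openCube, ball_pi x hs, Real.dist_eq]

theorem measurableSet_openCube (x : Rn n) (s : ℝ) : MeasurableSet (openCube x s) := by
  simp only [openCube, Set.ofPred_forall]
  measurability

theorem openCube_zero_prod_self {s : ℝ} (hs : 0 < s) :
    openCube (0 : Rn n) s ×ˢ openCube (0 : Rn n) s = Metric.ball 0 s := by
  rw [openCube_eq_ball 0 hs, ball_prod_same]
  rfl

end Cubes

section MeanNorm

variable {n : ℕ} {r : ℝ≥0∞}

/-- The `L_r` quasinorm of a function of `(h, x)` over `s·Iⁿ × Q` with the normalisation of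
`deltaE`, which makes it invariant under dilations. -/
def meanNorm (r : ℝ≥0∞) (s : ℝ) (Q : Set (Rn n)) (F : Rn n × Rn n → ℝ) : ℝ≥0∞ :=
  ENNReal.ofReal s ^ (-(2 * (n : ℝ)) / r.toReal) *
    eLpNorm F r (volume.restrict (openCube 0 s ×ˢ Q))

theorem deltaE_eq_meanNorm (l : ℕ) (r : ℝ≥0∞) (s : ℝ) (Q : Set (Rn n)) (φ : Rn n → ℝ) :
    deltaE n l r s Q φ = meanNorm r s Q (pairDiff l φ) := by
  rw [deltaE, meanNorm, Measure.prod_restrict, Measure.volume_eq_prod]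
  congr 2
  funext v
  exact (fwdDiff_iter_eq_sum l v.1 φ v.2).symm

theorem meanNorm_mono_set (s : ℝ) {Q Q' : Set (Rn n)} (h : Q ⊆ Q') (F : Rn n × Rn n → ℝ) :
    meanNorm r s Q F ≤ meanNorm r s Q' F := by
  unfold meanNorm
  gcongr

theorem meanNorm_add_le (s : ℝ) (Q : Set (Rn n)) {F G : Rn n × Rn n → ℝ} (hF : Measurable F)
    (hG : Measurable G) :
    meanNorm r s Q (F + G) ≤ LpAddConst r * (meanNorm r s Q F + meanNorm r s Q G) := by
  unfold meanNorm
  rw [← mul_add, mul_left_comm]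
  gcongr
  exact eLpNorm_add_le' hF.aestronglyMeasurable hG.aestronglyMeasurable r

theorem meanNorm_const_smul (s : ℝ) (Q : Set (Rn n)) (c : ℝ) (F : Rn n × Rn n → ℝ) :
    meanNorm r s Q (c • F) = ‖c‖ₑ * meanNorm r s Q F := by
  rw [meanNorm, eLpNorm_const_smul, meanNorm, mul_left_comm]

theorem meanNorm_le_sum_of_subset_biUnion {ι : Type*} {s : ℝ} {Q : Set (Rn n)} {U : Finset ι}
    {A : ι → Set (Rn n)} (hA : ∀ i ∈ U, MeasurableSet (A i)) (hQ : Q ⊆ ⋃ i ∈ U, A i)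
    {F : Rn n × Rn n → ℝ} (hF : Measurable F) :
    meanNorm r s Q F ≤ LpAddConst r ^ U.card * ∑ i ∈ U, meanNorm r s (A i) F := by
  unfold meanNorm
  rw [← Finset.mul_sum, mul_left_comm]
  gcongr
  refine eLpNorm_restrict_le_of_subset_biUnion hF.aestronglyMeasurable
    (fun i hi => (measurableSet_openCube 0 s).prod (hA i hi)) ?_ r
  rw [← Set.prod_iUnion₂]
  exact Set.prod_mono_right hQ

theorem meanNorm_comp_linearMap_le {L : Rn n × Rn n →ₗ[ℝ] Rn n × Rn n} {c s : ℝ} (hc : 0 < c)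
    (hL : |LinearMap.det L| = c ^ (2 * n)) {Q Q' : Set (Rn n)} (hQ' : MeasurableSet Q')
    (hmaps : Set.MapsTo L (openCube 0 s ×ˢ Q) (openCube 0 (c * s) ×ˢ Q'))
    {F : Rn n × Rn n → ℝ} (hF : Measurable F) :
    meanNorm r s Q (F ∘ L) ≤ meanNorm r (c * s) Q' F := by
  have hdet : ENNReal.ofReal |(LinearMap.det L)⁻¹| ^ (1 / r).toReal =
      ENNReal.ofReal c ^ (-(2 * (n : ℝ)) / r.toReal) := by
    rw [abs_inv, hL, ENNReal.ofReal_inv_of_pos (by positivity), ENNReal.ofReal_pow hc.le,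
      ← ENNReal.rpow_natCast, ← ENNReal.rpow_neg, ← ENNReal.rpow_mul, one_div,
      ENNReal.toReal_inv, ← div_eq_mul_inv, Nat.cast_mul, Nat.cast_ofNat]
  calc meanNorm r s Q (F ∘ L)
      ≤ ENNReal.ofReal s ^ (-(2 * (n : ℝ)) / r.toReal) *
          (ENNReal.ofReal |(LinearMap.det L)⁻¹| ^ (1 / r).toReal *
            eLpNorm F r (volume.restrict (openCube 0 (c * s) ×ˢ Q'))) := by
        unfold meanNorm
        gcongr
        have : (volume : Measure (Rn n × Rn n)).IsAddHaarMeasure :=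
          Measure.prod.instIsAddHaarMeasure volume volume
        refine eLpNorm_comp_linearMap_restrict_le volume ?_ hF.aestronglyMeasurable
          ((measurableSet_openCube 0 _).prod hQ') hmaps r
        rw [← abs_pos, hL]
        positivity
    _ = meanNorm r (c * s) Q' F := by
        rw [meanNorm, hdet, ENNReal.ofReal_mul hc.le,
          ENNReal.mul_rpow_of_ne_top ofReal_ne_top ofReal_ne_top, ← mul_assoc,
          mul_comm (ENNReal.ofReal s ^ _)]

end MeanNorm

section LocalEstimates

variable {n : ℕ}

theorem det_blockMap_smul_shear (c : ℝ) :
    LinearMap.det (blockMap (Rn n) (c • !![1, 0; 1, 1])) = c ^ (2 * n) := by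
  -- The shear is conjugate to its square.
  have hshear : LinearMap.det (blockMap (Rn n) !![1, 0; 1, 1]) = 1 := by
    have hT : IsUnit (!![1, 0; 0, 2] : Matrix (Fin 2) (Fin 2) ℝ) := by
      simp [Matrix.isUnit_iff_isUnit_det, Matrix.det_fin_two_of]
    have hconj : (!![1, 0; 1, 1] * !![1, 0; 1, 1] * !![1, 0; 0, 2] : Matrix (Fin 2) (Fin 2) ℝ) =
        !![1, 0; 0, 2] * !![1, 0; 1, 1] := by
      ext i j
      fin_cases i <;> fin_cases j <;> norm_num [Matrix.mul_fin_two]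
    have hS := det_blockMap_ne_zero (E := Rn n) (A := !![1, 0; 1, 1])
      (by simp [Matrix.isUnit_iff_isUnit_det, Matrix.det_fin_two_of])
    have h := congrArg (fun A => LinearMap.det (blockMap (Rn n) A)) hconj
    simp only [map_mul] at h
    rw [mul_comm, ← mul_assoc] at h
    exact mul_left_cancel₀ (mul_ne_zero (det_blockMap_ne_zero hT) hS) (h.trans (mul_one _).symm)
  have hsmul : blockMap (Rn n) (c • !![1, 0; 1, 1]) = c • blockMap (Rn n) !![1, 0; 1, 1] :=
    LinearMap.ext fun v => by simp [blockMap_apply]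
  rw [hsmul, LinearMap.det_smul, hshear, mul_one]
  simp [two_mul]

theorem meanNorm_blockDiff_smul_shear_le (l : ℕ) (r : ℝ≥0∞) {c : ℝ} (hc : 0 < c) (s S : ℝ)
    {φ : Rn n → ℝ} (hφ : Measurable φ) :
    meanNorm r s (openCube 0 S) (blockDiff l (c • !![1, 0; 1, 1]) φ) ≤
      deltaE n l r (c * s) (openCube 0 (c * (S + s))) φ := by
  rw [deltaE_eq_meanNorm]
  refine meanNorm_comp_linearMap_le (L := blockMap (Rn n) (c • !![1, 0; 1, 1])) hc
    (by rw [det_blockMap_smul_shear, abs_of_pos (by positivity)]) (measurableSet_openCube _ _)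
    ?_ (measurable_pairDiff l hφ)
  rintro ⟨h, x⟩ ⟨hh, hx⟩
  simp only [openCube, Set.mem_ofPred_eq, Pi.zero_apply, sub_zero] at hh hx
  simp only [blockMap_apply, openCube, Set.mem_prod, Set.mem_ofPred_eq, Pi.zero_apply, sub_zero]
  refine ⟨fun i => ?_, fun i => ?_⟩
  · simpa [abs_mul, abs_of_pos hc] using mul_lt_mul_of_pos_left (hh i) hc
  · have := (abs_add_le (x i) (h i)).trans_lt (add_lt_add (hx i) (hh i))
    simpa [← mul_add, abs_mul, abs_of_pos hc, add_comm] using mul_lt_mul_of_pos_left this hc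

theorem deltaE_openCube_eq_translate (l : ℕ) (r : ℝ≥0∞) (s S : ℝ) (z : Rn n) {φ : Rn n → ℝ}
    (hφ : Measurable φ) :
    deltaE n l r s (openCube z S) φ = deltaE n l r s (openCube 0 S) (fun y => φ (z + y)) := by
  have hpre : (z + ·) ⁻¹' openCube z S = openCube 0 S := by
    ext y
    simp [openCube]
  have hz := (measurePreserving_add_left volume z).restrict_preimage (measurableSet_openCube z S)
  rw [hpre] at hz
  rw [deltaE_eq_meanNorm, deltaE_eq_meanNorm, meanNorm, meanNorm, Measure.volume_eq_prod,
    ← Measure.prod_restrict, ← Measure.prod_restrict,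
    ← eLpNorm_comp_measurePreserving (measurable_pairDiff l hφ).aestronglyMeasurable
      ((MeasurePreserving.id (volume.restrict (openCube 0 s))).prod hz)]
  congr 2
  funext v
  simp [pairDiff, fwdDiff_iter_eq_sum, add_assoc]

theorem eventually_meanNorm_le_of_mem_diffSpan {l : ℕ} {G : (Rn n → ℝ) → Rn n × Rn n → ℝ}
    (hG : G ∈ diffSpan (Rn n) l) (r : ℝ≥0∞) : ∀ᶠ ρ : ℝ in atTop, ∃ C < ∞,
      ∀ φ : Rn n → ℝ, Measurable φ → ∀ s > 0, meanNorm r s (openCube 0 s) (G φ) ≤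
        C * deltaE n l r (ρ * s) (openCube 0 (ρ * s)) φ := by
  obtain ⟨C, hC, ρ₀, h⟩ := exists_eLpNorm_le_of_mem_diffSpan (volume : Measure (Rn n)) hG r
  filter_upwards [eventually_ge_atTop ρ₀, eventually_gt_atTop 0] with ρ hρ hρ₀
  set σ := -(2 * (n : ℝ)) / r.toReal
  have hρ₁ : ENNReal.ofReal ρ ≠ 0 := by simpa
  refine ⟨(ENNReal.ofReal ρ ^ σ)⁻¹ * C, mul_lt_top (ENNReal.inv_lt_top.2
    (ENNReal.rpow_pos (by simpa) ofReal_ne_top)) hC, fun φ hφ s hs => ?_⟩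
  rw [deltaE_eq_meanNorm, meanNorm, meanNorm, openCube_zero_prod_self hs,
    openCube_zero_prod_self (by positivity), Measure.volume_eq_prod]
  calc ENNReal.ofReal s ^ σ * eLpNorm (G φ) r _
      ≤ ENNReal.ofReal s ^ σ * (C * eLpNorm (pairDiff l φ) r _) := by
        gcongr
        exact h ρ hρ φ hφ s hs
    _ = (ENNReal.ofReal ρ ^ σ)⁻¹ * ENNReal.ofReal ρ ^ σ *
          (ENNReal.ofReal s ^ σ * (C * eLpNorm (pairDiff l φ) r _)) := by
        rw [ENNReal.inv_mul_cancel (ENNReal.rpow_pos (by simpa) ofReal_ne_top).ne'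
          (ENNReal.rpow_ne_top_of_ne_zero hρ₁ ofReal_ne_top), one_mul]
    _ = _ := by
        rw [ENNReal.ofReal_mul hρ₀.le, ENNReal.mul_rpow_of_ne_top ofReal_ne_top ofReal_ne_top]
        ring

theorem eventually_deltaE_le_dilate_add (l N : ℕ) (r : ℝ≥0∞) : ∀ᶠ ρ : ℝ in atTop, ∃ C < ∞,
    ∀ φ : Rn n → ℝ, Measurable φ → ∀ z, ∀ s > 0, deltaE n l r s (openCube z s) φ ≤
      LpAddConst r * (((2⁻¹ : ℝ≥0∞) ^ l) ^ N *
          deltaE n l r (2 ^ N * s) (openCube z (2 ^ N * (s + s))) φ +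
        C * deltaE n (l + 1) r (ρ * s) (openCube z (ρ * s)) φ) := by
  have hG := blockDiff_one_sub_expansion_mem_diffSpan (E := Rn n) l N
  filter_upwards [eventually_meanNorm_le_of_mem_diffSpan hG r] with ρ ⟨C, hC, h⟩
  refine ⟨C, hC, fun φ hφ z s hs => ?_⟩
  rw [deltaE_openCube_eq_translate _ _ _ _ _ hφ, deltaE_openCube_eq_translate _ _ _ _ _ hφ,
    deltaE_openCube_eq_translate _ _ _ _ _ hφ]
  replace hφ : Measurable fun y => φ (z + y) := hφ.comp (measurable_const_add z)
  generalize (fun y => φ (z + y)) = ψ at hφ ⊢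
  set A : Matrix (Fin 2) (Fin 2) ℝ := (2 : ℝ) ^ N • !![1, 0; 1, 1]
  set G := blockDiff (E := Rn n) l 1 - ((2⁻¹ : ℝ) ^ l) ^ N • blockDiff l A
  have hsplit : pairDiff l ψ = ((2⁻¹ : ℝ) ^ l) ^ N • blockDiff l A ψ + G ψ := by
    simp [G, blockDiff_one]
  have hconst : ‖((2⁻¹ : ℝ) ^ l) ^ N‖ₑ = ((2⁻¹ : ℝ≥0∞) ^ l) ^ N := by
    rw [enorm_pow, enorm_pow, enorm_inv two_ne_zero, Real.enorm_eq_ofReal zero_le_two,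
      ENNReal.ofReal_ofNat]
  rw [deltaE_eq_meanNorm, hsplit, ← hconst]
  have hA : Measurable (blockDiff l A ψ) := (measurable_pairDiff l hφ).comp (measurable_blockMap A)
  refine (meanNorm_add_le s _ (hA.const_smul _) (measurable_of_mem_diffSpan hG hφ)).trans ?_
  rw [meanNorm_const_smul]
  gcongr
  · exact meanNorm_blockDiff_smul_shear_le l r (by positivity) s s hφ
  · exact h ψ hφ s hs

theorem deltaE_succ_le (l : ℕ) (r : ℝ≥0∞) {s : ℝ} (hs : 0 ≤ s) (S : ℝ) (z : Rn n) {φ : Rn n → ℝ}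
    (hφ : Measurable φ) : deltaE n (l + 1) r s (openCube z S) φ ≤
      2 * LpAddConst r * deltaE n l r s (openCube z (S + s)) φ := by
  rw [deltaE_openCube_eq_translate _ _ _ _ _ hφ, deltaE_openCube_eq_translate _ _ _ _ _ hφ]
  replace hφ : Measurable fun y => φ (z + y) := hφ.comp (measurable_const_add z)
  generalize (fun y => φ (z + y)) = ψ at hφ ⊢
  have hsplit : pairDiff (l + 1) ψ =
      blockDiff l ((1 : ℝ) • !![1, 0; 1, 1]) ψ + (-1 : ℝ) • pairDiff l ψ := by
    rw [← blockDiff_one, blockDiff_succ, ← blockDiff_one, mul_one, one_smul]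
    simp [sub_eq_add_neg]
  rw [deltaE_eq_meanNorm, hsplit]
  have hshear := meanNorm_blockDiff_smul_shear_le l r zero_lt_one s S hφ
  rw [one_mul, one_mul] at hshear
  have hid : meanNorm r s (openCube 0 S) (pairDiff l ψ) ≤
      deltaE n l r s (openCube 0 (S + s)) ψ := by
    rw [deltaE_eq_meanNorm]
    exact meanNorm_mono_set s (openCube_mono 0 (by linarith)) _
  calc _ ≤ LpAddConst r * (deltaE n l r s (openCube 0 (S + s)) ψ +
        deltaE n l r s (openCube 0 (S + s)) ψ) := by
        refine (meanNorm_add_le s _ ((measurable_pairDiff l hφ).comp (measurable_blockMap _))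
          ((measurable_pairDiff l hφ).const_smul _)).trans ?_
        rw [meanNorm_const_smul, enorm_neg, enorm_one, one_mul]
        exact mul_le_mul_right (add_le_add hshear hid) _
    _ = _ := by ring

theorem exists_deltaE_zero_le_eLpNorm (r : ℝ≥0∞) {s : ℝ} (hs : 0 < s) : ∃ C < ∞,
    ∀ φ : Rn n → ℝ, Measurable φ → ∀ Q,
      deltaE n 0 r s Q φ ≤ C * eLpNorm φ r (volume.restrict Q) := by
  have hvol : volume (openCube (0 : Rn n) s) < ∞ := by
    rw [openCube_eq_ball 0 hs]
    exact measure_ball_lt_top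
  refine ⟨ENNReal.ofReal s ^ (-(2 * (n : ℝ)) / r.toReal) *
    volume (openCube (0 : Rn n) s) ^ (1 / r).toReal, mul_lt_top
      (ENNReal.rpow_ne_top_of_ne_zero (by simpa) ofReal_ne_top).lt_top
      (ENNReal.rpow_lt_top_of_nonneg toReal_nonneg hvol.ne), fun φ hφ Q => ?_⟩
  rw [deltaE, mul_assoc]
  gcongr
  calc _ = eLpNorm (φ ∘ Prod.snd) r
        ((volume.restrict (openCube (0 : Rn n) s)).prod (volume.restrict Q)) := by
        congr 1
        funext v
        simp [diffl]
    _ = eLpNorm φ r (volume (openCube (0 : Rn n) s) • volume.restrict Q) := by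
        rw [← eLpNorm_map_measure hφ.aestronglyMeasurable measurable_snd.aemeasurable,
          Measure.map_snd_prod, Measure.restrict_apply_univ]
    _ ≤ _ := eLpNorm_smul_measure_le _ _ _ _

theorem exists_deltaE_le_eLpNorm (l : ℕ) (r : ℝ≥0∞) {s : ℝ} (hs : 0 < s) : ∃ C < ∞,
    ∀ φ : Rn n → ℝ, Measurable φ → ∀ z S, deltaE n l r s (openCube z S) φ ≤
      C * eLpNorm φ r (volume.restrict (openCube z (S + l * s))) := by
  induction l with
  | zero =>
    obtain ⟨C, hC, h⟩ := exists_deltaE_zero_le_eLpNorm (n := n) r hs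
    exact ⟨C, hC, fun φ hφ z S => by simpa using h φ hφ (openCube z S)⟩
  | succ l ih =>
    obtain ⟨C, hC, h⟩ := ih
    refine ⟨2 * LpAddConst r * C, mul_lt_top (mul_lt_top ofNat_lt_top (LpAddConst_lt_top r)) hC,
      fun φ hφ z S => (deltaE_succ_le l r hs.le S z hφ).trans ?_⟩
    rw [mul_assoc (2 * _)]
    gcongr
    rw [show S + (l + 1 : ℕ) * s = S + s + l * s by push_cast; ring]
    exact h φ hφ z (S + s)

end LocalEstimates

/-! ### Dyadic cubes -/

section DyadicCubes

variable {n : ℕ}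

theorem mem_dyadicCubeHalf_iff {k : ℕ} {m : Fin n → ℤ} {x : Rn n} :
    x ∈ dyadicCubeHalf n k m ↔ ∀ i, ⌊2 ^ k * x i⌋ = m i := by
  have h2 : (0 : ℝ) < 2 ^ k := by positivity
  simp only [dyadicCubeHalf, Set.mem_ofPred_eq, div_le_iff₀ h2, lt_div_iff₀ h2, Int.floor_eq_iff,
    mul_comm]

theorem measurableSet_dyadicCubeHalf (k : ℕ) (m : Fin n → ℤ) :
    MeasurableSet (dyadicCubeHalf n k m) := by
  simp only [dyadicCubeHalf, Set.ofPred_forall]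
  measurability

theorem dyadicCubeHalf_nonempty (k : ℕ) (m : Fin n → ℤ) : (dyadicCubeHalf n k m).Nonempty :=
  ⟨fun i => m i / 2 ^ k, mem_dyadicCubeHalf_iff.2 fun i => by
    rw [mul_div_cancel₀ _ (by positivity), Int.floor_intCast]⟩

/-- The lattice points of sup norm at most `R`: the offsets of the dyadic cubes which surround a
given one. -/
def latticeBall (n R : ℕ) : Finset (Fin n → ℤ) :=
  Fintype.piFinset fun _ => Finset.Icc (-(R : ℤ)) R

theorem mem_latticeBall {R : ℕ} {u : Fin n → ℤ} : u ∈ latticeBall n R ↔ ∀ i, |u i| ≤ R := by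
  simp [latticeBall, abs_le]

theorem openCube_subset_biUnion_dyadicCubeHalf {k : ℕ} {m : Fin n → ℤ} {z : Rn n}
    (hz : z ∈ dyadicCubeHalf n k m) (R : ℕ) :
    openCube z (R / 2 ^ k) ⊆ ⋃ u ∈ latticeBall n R, dyadicCubeHalf n k (m + u) := by
  intro x hx
  rw [mem_dyadicCubeHalf_iff] at hz
  refine Set.mem_biUnion (x := fun i => ⌊2 ^ k * x i⌋ - m i) (mem_latticeBall.2 fun i => ?_)
    (mem_dyadicCubeHalf_iff.2 fun i => by simp)
  have hxz : |2 ^ k * x i - 2 ^ k * z i| < R := by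
    rw [← mul_sub, abs_mul, abs_of_pos (by positivity), ← lt_div_iff₀' (by positivity)]
    exact hx i
  have h₁ := Int.floor_le (2 ^ k * x i)
  have h₂ := Int.lt_floor_add_one (2 ^ k * x i)
  have h₃ := Int.floor_le (2 ^ k * z i)
  have h₄ := Int.lt_floor_add_one (2 ^ k * z i)
  rw [hz i] at h₃ h₄
  rw [abs_lt] at hxz
  rw [← Int.lt_add_one_iff, ← Int.cast_lt (R := ℝ)]
  push_cast
  rw [abs_lt]
  constructor <;> linarith

theorem dyadicCubeHalf_subset_openCube {k : ℕ} {m : Fin n → ℤ} {z : Rn n}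
    (hz : z ∈ dyadicCubeHalf n k m) : dyadicCubeHalf n k m ⊆ openCube z (1 / 2 ^ k) := by
  intro x hx i
  have hxz := Int.abs_sub_lt_one_of_floor_eq_floor
    ((mem_dyadicCubeHalf_iff.1 hx i).trans (mem_dyadicCubeHalf_iff.1 hz i).symm)
  rwa [← mul_sub, abs_mul, abs_of_pos (by positivity), ← lt_div_iff₀' (by positivity)] at hxz

/-- The index of the dyadic cube `N` levels up which contains the cube of index `m`. -/
def dyadicAncestor (N : ℕ) (m : Fin n → ℤ) : Fin n → ℤ := fun i => m i / 2 ^ N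

theorem dyadicCubeHalf_subset_ancestor (N k : ℕ) (m : Fin n → ℤ) :
    dyadicCubeHalf n (N + k) m ⊆ dyadicCubeHalf n k (dyadicAncestor N m) := by
  intro x hx
  rw [mem_dyadicCubeHalf_iff] at hx ⊢
  intro i
  have hscale : (2 : ℝ) ^ (N + k) * x i = 2 ^ k * x i * (2 ^ N : ℕ) := by
    push_cast
    ring
  rw [← Int.mul_natCast_floor_div_cancel (n := 2 ^ N) (by positivity), ← hscale, hx i]
  rfl

theorem pairwise_disjoint_dyadicCubeHalf (k : ℕ) :
    Pairwise (Function.onFun Disjoint (dyadicCubeHalf n k)) := fun _ _ h =>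
  Set.disjoint_left.2 fun _ hx hx' => h <| funext fun i =>
    (mem_dyadicCubeHalf_iff.1 hx i).symm.trans (mem_dyadicCubeHalf_iff.1 hx' i)

theorem iUnion_dyadicCubeHalf (k : ℕ) : ⋃ m, dyadicCubeHalf n k m = Set.univ :=
  Set.eq_univ_of_forall fun x => Set.mem_iUnion.2
    ⟨fun i => ⌊2 ^ k * x i⌋, mem_dyadicCubeHalf_iff.2 fun _ => rfl⟩

theorem dyadicCubeHalf_eq_iUnion_descendants (N k : ℕ) (m : Fin n → ℤ) :
    dyadicCubeHalf n k m =
      ⋃ m' : {m' // dyadicAncestor N m' = m}, dyadicCubeHalf n (N + k) m'.1 := by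
  refine Set.Subset.antisymm (fun x hx => ?_) (Set.iUnion_subset ?_)
  · obtain ⟨m', hm'⟩ := Set.mem_iUnion.1 ((iUnion_dyadicCubeHalf (N + k)).ge (Set.mem_univ x))
    refine Set.mem_iUnion.2 ⟨⟨m', ?_⟩, hm'⟩
    by_contra h
    exact Set.disjoint_left.1 (pairwise_disjoint_dyadicCubeHalf k h)
      (dyadicCubeHalf_subset_ancestor N k m' hm') hx
  · rintro ⟨m', rfl⟩
    exact dyadicCubeHalf_subset_ancestor N k m'

theorem volume_dyadicCubeHalf (k : ℕ) (m : Fin n → ℤ) :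
    volume (dyadicCubeHalf n k m) = ((2 : ℝ≥0∞) ^ (k * n))⁻¹ := by
  have hpi : dyadicCubeHalf n k m =
      Set.univ.pi fun i => Set.Ico ((m i : ℝ) / 2 ^ k) ((m i + 1) / 2 ^ k) := by
    ext x
    simp [dyadicCubeHalf]
  rw [hpi, Real.volume_pi_Ico]
  simp only [add_div, add_sub_cancel_left, one_div]
  rw [ENNReal.ofReal_inv_of_pos (by positivity), ENNReal.ofReal_pow (by norm_num)]
  simp [pow_mul, ENNReal.inv_pow]

theorem restrict_dyadicCube (k : ℕ) (m : Fin n → ℤ) :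
    (volume : Measure (Rn n)).restrict (dyadicCube n k m) =
      volume.restrict (dyadicCubeHalf n k m) := by
  have hopen : dyadicCube n k m =
      Set.univ.pi fun i => Set.Ioo ((m i : ℝ) / 2 ^ k) ((m i + 1) / 2 ^ k) := by
    ext x
    simp [dyadicCube]
  have hhalf : dyadicCubeHalf n k m =
      Set.univ.pi fun i => Set.Ico ((m i : ℝ) / 2 ^ k) ((m i + 1) / 2 ^ k) := by
    ext x
    simp [dyadicCubeHalf]
  rw [hopen, hhalf]
  exact Measure.restrict_congr_set
    (Measure.univ_pi_Ioo_ae_eq_Icc.trans Measure.univ_pi_Ico_ae_eq_Icc.symm)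

end DyadicCubes

section DyadicEstimates

variable {n : ℕ}

/-- The local difference `δ^l_r(Q_{k,m}) φ`, with the increments ranging over `2^{1-k}·Iⁿ` as in the
quasinorm `tildeBnorm`. -/
def dyadicDelta (n l : ℕ) (r : ℝ≥0∞) (φ : Rn n → ℝ) (k : ℕ) (m : Fin n → ℤ) : ℝ≥0∞ :=
  deltaE n l r (2 ^ (1 - (k : ℤ))) (dyadicCubeHalf n k m) φ

theorem two_zpow_one_sub (k : ℕ) : (2 : ℝ) ^ (1 - (k : ℤ)) = 2 / 2 ^ k := by
  rw [zpow_sub₀ two_ne_zero, zpow_one, zpow_natCast]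

theorem deltaE_openCube_le_sum_dyadicDelta (l : ℕ) (r : ℝ≥0∞) {φ : Rn n → ℝ} (hφ : Measurable φ)
    {k : ℕ} {m : Fin n → ℤ} {z : Rn n} (hz : z ∈ dyadicCubeHalf n k m) {S : ℝ} (R : ℕ)
    (hS : S ≤ R / 2 ^ k) : deltaE n l r (2 ^ (1 - (k : ℤ))) (openCube z S) φ ≤
      LpAddConst r ^ (latticeBall n R).card *
        ∑ u ∈ latticeBall n R, dyadicDelta n l r φ k (m + u) := by
  simp only [dyadicDelta, deltaE_eq_meanNorm]
  exact meanNorm_le_sum_of_subset_biUnion (fun _ _ => measurableSet_dyadicCubeHalf _ _)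
    ((openCube_mono z hS).trans (openCube_subset_biUnion_dyadicCubeHalf hz R))
    (measurable_pairDiff l hφ)

theorem dyadicDelta_le_deltaE_openCube (l : ℕ) (r : ℝ≥0∞) (φ : Rn n → ℝ) {k : ℕ} {m : Fin n → ℤ}
    {z : Rn n} (hz : z ∈ dyadicCubeHalf n k m) {S : ℝ} (hS : 1 / 2 ^ k ≤ S) :
    dyadicDelta n l r φ k m ≤ deltaE n l r (2 ^ (1 - (k : ℤ))) (openCube z S) φ := by
  rw [dyadicDelta, deltaE_eq_meanNorm, deltaE_eq_meanNorm]
  exact meanNorm_mono_set _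
    ((dyadicCubeHalf_subset_openCube hz).trans (openCube_mono z hS)) _

theorem exists_dyadicDelta_succ_le (l : ℕ) (r : ℝ≥0∞) : ∃ C < ∞, ∀ φ : Rn n → ℝ, Measurable φ →
    ∀ k m, dyadicDelta n (l + 1) r φ k m ≤
      C * ∑ u ∈ latticeBall n 4, dyadicDelta n l r φ k (m + u) := by
  refine ⟨2 * LpAddConst r * LpAddConst r ^ (latticeBall n 4).card, mul_lt_top
    (mul_lt_top ofNat_lt_top (LpAddConst_lt_top r)) (pow_lt_top (LpAddConst_lt_top r)),
    fun φ hφ k m => ?_⟩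
  obtain ⟨z, hz⟩ := dyadicCubeHalf_nonempty k m
  calc dyadicDelta n (l + 1) r φ k m
      ≤ deltaE n (l + 1) r (2 ^ (1 - (k : ℤ))) (openCube z (1 / 2 ^ k)) φ :=
        dyadicDelta_le_deltaE_openCube (l + 1) r φ hz le_rfl
    _ ≤ 2 * LpAddConst r *
          deltaE n l r (2 ^ (1 - (k : ℤ))) (openCube z (1 / 2 ^ k + 2 ^ (1 - (k : ℤ)))) φ :=
        deltaE_succ_le l r (by positivity) _ z hφ
    _ ≤ _ := by
        rw [mul_assoc (2 * _)]
        gcongr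
        refine deltaE_openCube_le_sum_dyadicDelta l r hφ hz 4 ?_
        rw [two_zpow_one_sub, ← add_div]
        gcongr
        norm_num

theorem dyadicDelta_le_dilate_add_of_deltaE_le {l N M : ℕ} {r C : ℝ≥0∞} {φ : Rn n → ℝ}
    (hφ : Measurable φ) (h : ∀ z, ∀ s > 0, deltaE n l r s (openCube z s) φ ≤
      LpAddConst r * (((2⁻¹ : ℝ≥0∞) ^ l) ^ N *
          deltaE n l r (2 ^ N * s) (openCube z (2 ^ N * (s + s))) φ +
        C * deltaE n (l + 1) r (2 ^ (N + M) * s) (openCube z (2 ^ (N + M) * s)) φ))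
    (k : ℕ) (m : Fin n → ℤ) : dyadicDelta n l r φ (N + (M + k)) m ≤
      LpAddConst r * (((2⁻¹ : ℝ≥0∞) ^ l) ^ N * (LpAddConst r ^ (latticeBall n 4).card *
          ∑ u ∈ latticeBall n 4, dyadicDelta n l r φ (M + k) (dyadicAncestor N m + u)) +
        C * (LpAddConst r ^ (latticeBall n 4).card *
          ∑ u ∈ latticeBall n 4,
            dyadicDelta n (l + 1) r φ k (dyadicAncestor (N + M) m + u))) := by
  obtain ⟨z, hz⟩ := dyadicCubeHalf_nonempty (N + (M + k)) m
  have hz₁ := dyadicCubeHalf_subset_ancestor N (M + k) m hz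
  have hz₂ := dyadicCubeHalf_subset_ancestor (N + M) k m (by rwa [add_assoc])
  set s : ℝ := 2 ^ (1 - ((N + (M + k) : ℕ) : ℤ)) with hs
  have hs₁ : 2 ^ N * s = 2 ^ (1 - ((M + k : ℕ) : ℤ)) := by
    rw [hs, two_zpow_one_sub, two_zpow_one_sub, pow_add 2 N]
    field_simp
  have hs₂ : 2 ^ (N + M) * s = 2 ^ (1 - (k : ℤ)) := by
    rw [hs, two_zpow_one_sub, two_zpow_one_sub, pow_add 2 N, pow_add 2 N, pow_add 2 M]
    field_simp
  refine (dyadicDelta_le_deltaE_openCube l r φ hz (S := s)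
    (by rw [hs, two_zpow_one_sub]; gcongr; exact one_le_two)).trans
    ((h z s (by positivity)).trans ?_)
  rw [mul_add (2 ^ N), hs₁, hs₂]
  gcongr
  · refine deltaE_openCube_le_sum_dyadicDelta l r hφ hz₁ 4 ?_
    rw [two_zpow_one_sub, ← add_div]
    norm_num
  · refine deltaE_openCube_le_sum_dyadicDelta (l + 1) r hφ hz₂ 4 ?_
    rw [two_zpow_one_sub]
    gcongr
    norm_num

theorem exists_dyadicDelta_le_dilate_add (l N : ℕ) (r : ℝ≥0∞) : ∃ M, ∃ C < ∞,
    ∀ φ : Rn n → ℝ, Measurable φ → ∀ k m, dyadicDelta n l r φ (N + (M + k)) m ≤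
      LpAddConst r ^ ((latticeBall n 4).card + 1) * ((2⁻¹ : ℝ≥0∞) ^ l) ^ N *
        ∑ u ∈ latticeBall n 4, dyadicDelta n l r φ (M + k) (dyadicAncestor N m + u) +
      C * ∑ u ∈ latticeBall n 4,
        dyadicDelta n (l + 1) r φ k (dyadicAncestor (N + M) m + u) := by
  have htwo : Tendsto (fun j : ℕ => (2 : ℝ) ^ j) atTop atTop :=
    tendsto_pow_atTop_atTop_of_one_lt one_lt_two
  obtain ⟨j, ⟨C, hC, h⟩, hj⟩ := ((htwo.eventually
    (eventually_deltaE_le_dilate_add (n := n) l N r)).and (eventually_ge_atTop N)).exists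
  obtain ⟨M, rfl⟩ := Nat.exists_eq_add_of_le hj
  have hA : LpAddConst r < ∞ := LpAddConst_lt_top r
  refine ⟨M, LpAddConst r * C * LpAddConst r ^ (latticeBall n 4).card,
    mul_lt_top (mul_lt_top hA hC) (pow_lt_top hA), fun φ hφ k m => ?_⟩
  refine (dyadicDelta_le_dilate_add_of_deltaE_le hφ (h φ hφ) k m).trans_eq ?_
  ring

theorem exists_dyadicDelta_le_eLpNorm (l k : ℕ) (r : ℝ≥0∞) : ∃ C < ∞, ∀ φ : Rn n → ℝ,
    Measurable φ → ∀ m, dyadicDelta n l r φ k m ≤ C * ∑ u ∈ latticeBall n (2 * l + 1),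
      eLpNorm φ r (volume.restrict (dyadicCubeHalf n 0 (dyadicAncestor k m + u))) := by
  obtain ⟨C, hC, h⟩ := exists_deltaE_le_eLpNorm (n := n) l r (s := 2 ^ (1 - (k : ℤ)))
    (by positivity)
  refine ⟨C * LpAddConst r ^ (latticeBall n (2 * l + 1)).card,
    mul_lt_top hC (pow_lt_top (LpAddConst_lt_top r)), fun φ hφ m => ?_⟩
  obtain ⟨z, hz⟩ := dyadicCubeHalf_nonempty k m
  have hz₀ := dyadicCubeHalf_subset_ancestor k 0 m hz
  refine (dyadicDelta_le_deltaE_openCube l r φ hz le_rfl).trans ((h φ hφ z _).trans ?_)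
  rw [mul_assoc C]
  gcongr
  refine eLpNorm_restrict_le_of_subset_biUnion hφ.aestronglyMeasurable
    (fun _ _ => measurableSet_dyadicCubeHalf _ _)
    (Set.Subset.trans (openCube_mono z ?_) (openCube_subset_biUnion_dyadicCubeHalf hz₀ _)) r
  have hk : (1 : ℝ) ≤ 2 ^ k := one_le_pow₀ one_le_two
  rw [two_zpow_one_sub, mul_div_assoc', ← add_div, pow_zero, div_one]
  push_cast
  exact (div_le_self (by positivity) hk).trans (by linarith)

end DyadicEstimates

/-! ### Weights on the dyadic cubes -/

section Weights

variable {n : ℕ} {p : ℝ≥0∞}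

theorem le_pow_mul_of_abs_sub_le {w : (Fin n → ℤ) → ℝ≥0∞} {c : ℝ≥0∞}
    (hw : ∀ m m', (∀ i, |m i - m' i| ≤ 1) → w m ≤ c * w m') {R : ℕ} {m m' : Fin n → ℤ}
    (hm : ∀ i, |m i - m' i| ≤ R) : w m ≤ c ^ R * w m' := by
  induction R generalizing m with
  | zero =>
    obtain rfl : m = m' := funext fun i => sub_eq_zero.1 (abs_nonpos_iff.1 (hm i))
    simp
  | succ R ih =>
    -- `m₁` moves each coordinate of `m` by at most one unit towards `m'`.
    set m₁ : Fin n → ℤ := fun i => m i + max (-1) (min 1 (m' i - m i)) with hm₁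
    have hnear : ∀ i, |m i - m₁ i| ≤ 1 := fun i => by
      rw [abs_le]
      simp only [hm₁]
      omega
    have hcloser : ∀ i, |m₁ i - m' i| ≤ R := fun i => by
      have hi := abs_le.1 (hm i)
      push_cast at hi
      rw [abs_le]
      simp only [hm₁]
      omega
    calc w m ≤ c * w m₁ := hw m m₁ hnear
      _ ≤ c * (c ^ R * w m') := by
          gcongr
          exact ih hcloser
      _ = c ^ (R + 1) * w m' := by ring

theorem lqNorm_mul_sum_latticeBall_le (hp : 0 < p) {w : (Fin n → ℤ) → ℝ≥0∞} {c : ℝ≥0∞}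
    (hw : ∀ m m', (∀ i, |m i - m' i| ≤ 1) → w m ≤ c * w m') (R : ℕ) (B : (Fin n → ℤ) → ℝ≥0∞) :
    lqNorm p (fun m => w m * ∑ u ∈ latticeBall n R, B (m + u)) ≤
      LpAddConst p ^ (latticeBall n R).card * ((latticeBall n R).card * c ^ R) *
        lqNorm p (fun m => w m * B m) := by
  have hshift : ∀ u ∈ latticeBall n R, lqNorm p (fun m => w m * B (m + u)) ≤
      c ^ R * lqNorm p (fun m => w m * B m) := fun u hu => by
    calc lqNorm p (fun m => w m * B (m + u))
        ≤ lqNorm p (fun m => c ^ R * (w (m + u) * B (m + u))) := by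
          refine lqNorm_mono fun m => ?_
          rw [← mul_assoc]
          gcongr
          exact le_pow_mul_of_abs_sub_le hw (by simpa using mem_latticeBall.1 hu)
      _ ≤ c ^ R * lqNorm p (fun m => w m * B m) := by
          rw [lqNorm_const_mul hp]
          gcongr _ * ?_
          exact lqNorm_comp_le_of_injective (fun m => w m * B m) (add_left_injective u)
  simp_rw [Finset.mul_sum]
  refine (lqNorm_sum_le hp _ fun u m => w m * B (m + u)).trans ?_
  rw [mul_assoc]
  gcongr
  rw [mul_assoc, ← nsmul_eq_mul]
  exact Finset.sum_le_card_nsmul _ _ _ hshift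

theorem lpNormE_restrict_tbarOf (hp : 0 < p) (T : ℕ → (Fin n → ℤ) → ℝ≥0∞) (k : ℕ)
    (m : Fin n → ℤ) :
    lpNormE p (volume.restrict (dyadicCubeHalf n k m)) (tbarOf n p T k) = T k m := by
  set a : ℝ≥0∞ := 2 ^ (((k * n : ℕ) : ℝ) / p.toReal) with ha
  have hconst : tbarOf n p T k =ᵐ[volume.restrict (dyadicCubeHalf n k m)] fun _ => a * T k m := by
    filter_upwards [ae_restrict_mem (measurableSet_dyadicCubeHalf k m)] with x hx
    rw [tbarOf, tsum_eq_single m fun m' hm' => Set.indicator_of_notMem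
      (Set.disjoint_left.1 (pairwise_disjoint_dyadicCubeHalf k hm'.symm) hx) _,
      Set.indicator_of_mem hx]
  have hvol : ((2 : ℝ≥0∞) ^ (k * n))⁻¹ ^ (1 / p.toReal) = a⁻¹ := by
    rw [ha, ENNReal.inv_rpow, ← ENNReal.rpow_natCast, ← ENNReal.rpow_mul, mul_one_div]
  have ha₀ : a ≠ 0 := (ENNReal.rpow_pos (by simp) (by simp)).ne'
  have ha_top : a ≠ ∞ := ENNReal.rpow_ne_top_of_ne_zero (by simp) (by simp)
  rw [lpNormE_eq_eLpNorm hp, eLpNorm_congr_ae hconst, eLpNorm_const _ hp.ne',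
    Measure.restrict_apply_univ, volume_dyadicCubeHalf, hvol, enorm_eq_self, mul_right_comm,
    ENNReal.mul_inv_cancel ha₀ ha_top, one_mul]
  rw [Ne, Measure.restrict_eq_zero, volume_dyadicCubeHalf]
  simp

theorem avgNorm_eq_mul_lpNormE (k : ℕ) (e : ℝ≥0∞) (m : Fin n → ℤ) (f : Rn n → ℝ≥0∞) :
    avgNorm n k e (dyadicCube n k m) f = ((2 : ℝ≥0∞) ^ (k * n)) ^ (1 / e.toReal) *
      lpNormE e (volume.restrict (dyadicCubeHalf n k m)) f := by
  rw [avgNorm, lpNormE, restrict_dyadicCube]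
  split_ifs with h
  · simp [h]
  · rw [ENNReal.mul_rpow_of_nonneg _ _ (by positivity)]

theorem avgNorm_tbarOf_self (hp : 0 < p) (T : ℕ → (Fin n → ℤ) → ℝ≥0∞) (k : ℕ) (m : Fin n → ℤ) :
    avgNorm n k p (dyadicCube n k m) (tbarOf n p T k) =
      ((2 : ℝ≥0∞) ^ (k * n)) ^ (1 / p.toReal) * T k m := by
  rw [avgNorm_eq_mul_lpNormE, lpNormE_restrict_tbarOf hp]

theorem avgNorm_tbarOf_add (hp : 0 < p) (T : ℕ → (Fin n → ℤ) → ℝ≥0∞) (N k : ℕ) (m : Fin n → ℤ) :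
    avgNorm n k p (dyadicCube n k m) (tbarOf n p T (N + k)) =
      ((2 : ℝ≥0∞) ^ (k * n)) ^ (1 / p.toReal) *
        lqNorm p (fun m' : {m' // dyadicAncestor N m' = m} => T (N + k) m') := by
  rw [avgNorm_eq_mul_lpNormE, dyadicCubeHalf_eq_iUnion_descendants N, lpNormE_iUnion]
  · simp_rw [lpNormE_restrict_tbarOf hp]
  · exact fun _ => measurableSet_dyadicCubeHalf _ _
  · exact fun _ _ h => pairwise_disjoint_dyadicCubeHalf _ (Subtype.coe_injective.ne h)

theorem tkm_lt_top {t : ℕ → Rn n → ℝ} (ht : pAdmissible n p t) (k : ℕ) (m : Fin n → ℤ) :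
    tkm n p t k m < ∞ := by
  refine (eLpNorm_mono_measure _ (Measure.restrict_mono (fun x hx => ?_) le_rfl)).trans_lt
    ((ht k).2.2 (Set.Icc (fun i => (m i : ℝ) / 2 ^ k) fun i => ((m i : ℝ) + 1) / 2 ^ k)
      isCompact_Icc)
  exact ⟨fun i => (hx i).1.le, fun i => (hx i).2.le⟩

theorem tkm_eq_lpNormE (hp : 0 < p) {t : ℕ → Rn n → ℝ} (ht : pAdmissible n p t) (k : ℕ)
    (m : Fin n → ℤ) : tkm n p t k m =
      lpNormE p (volume.restrict (dyadicCubeHalf n k m)) fun x => ENNReal.ofReal (t k x) := by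
  rw [tkm, restrict_dyadicCube, lpNormE_eq_eLpNorm hp]
  exact eLpNorm_congr_enorm_ae (ae_of_all _ fun x => Real.enorm_of_nonneg ((ht k).1.2 x).le)

theorem lpNormE_eq_lqNorm_restrict_dyadicCubeHalf (p : ℝ≥0∞) (k : ℕ) (f : Rn n → ℝ≥0∞) :
    lpNormE p volume f =
      lqNorm p fun m => lpNormE p (volume.restrict (dyadicCubeHalf n k m)) f := by
  rw [← lpNormE_iUnion p volume (measurableSet_dyadicCubeHalf k)
    (pairwise_disjoint_dyadicCubeHalf k), iUnion_dyadicCubeHalf, Measure.restrict_univ]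

theorem lqNorm_tkm_mul_eq (hp : 0 < p) {t : ℕ → Rn n → ℝ} (ht : pAdmissible n p t) (k : ℕ)
    (B : (Fin n → ℤ) → ℝ≥0∞) : lqNorm p (fun m => tkm n p t k m * B m) =
      lqNorm p fun m => lpNormE p (volume.restrict (dyadicCubeHalf n k m))
        fun x => ENNReal.ofReal (t k x) * B m := by
  simp_rw [tkm_eq_lpNormE hp ht]
  simp_rw [lpNormE_mul_const hp ((ht k).1.1.ennreal_ofReal.aemeasurable)]

theorem lpNormE_mul_le_lqNorm_tkm (hp : 0 < p) {t : ℕ → Rn n → ℝ} (ht : pAdmissible n p t)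
    (k : ℕ) {B : (Fin n → ℤ) → ℝ≥0∞} {f : Rn n → ℝ≥0∞}
    (hB : ∀ m, ∀ x ∈ dyadicCubeHalf n k m, f x ≤ B m) :
    lpNormE p volume (fun x => ENNReal.ofReal (t k x) * f x) ≤
      lqNorm p fun m => tkm n p t k m * B m := by
  rw [lqNorm_tkm_mul_eq hp ht, lpNormE_eq_lqNorm_restrict_dyadicCubeHalf p k]
  gcongr with m
  refine lpNormE_mono_ae ?_
  filter_upwards [ae_restrict_mem (measurableSet_dyadicCubeHalf k m)] with x hx
  gcongr
  exact hB m x hx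

theorem lqNorm_tkm_le_lpNormE_mul (hp : 0 < p) {t : ℕ → Rn n → ℝ} (ht : pAdmissible n p t)
    (k : ℕ) {B : (Fin n → ℤ) → ℝ≥0∞} {f : Rn n → ℝ≥0∞}
    (hB : ∀ m, ∀ x ∈ dyadicCubeHalf n k m, B m ≤ f x) :
    lqNorm p (fun m => tkm n p t k m * B m) ≤
      lpNormE p volume fun x => ENNReal.ofReal (t k x) * f x := by
  rw [lqNorm_tkm_mul_eq hp ht, lpNormE_eq_lqNorm_restrict_dyadicCubeHalf p k]
  gcongr with m
  refine lpNormE_mono_ae ?_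
  filter_upwards [ae_restrict_mem (measurableSet_dyadicCubeHalf k m)] with x hx
  gcongr
  exact hB m x hx

/-- The `p`-admissible weight sequences with the conditions (2.15), for `σ₂ = p`, and (2.16) of
the class `X^{α₃}_{α,σ,p}`: the weights grow at most like `2^{α₂ k}` and vary slowly between
neighbouring cubes. -/
structure MemXUpper (n : ℕ) (α₂ α₃ : ℝ) (p : ℝ≥0∞) (t : ℕ → Rn n → ℝ) : Prop where
  admissible : pAdmissible n p t
  growth : ∃ C₂ < ∞, ∀ k j : ℕ, k ≤ j → ∀ m : Fin n → ℤ,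
    (avgNorm n k p (dyadicCube n k m) (tbarOf n p (tkm n p t) k))⁻¹ *
      avgNorm n k p (dyadicCube n k m) (tbarOf n p (tkm n p t) j) ≤
      C₂ * (2 : ℝ≥0∞) ^ (α₂ * ((j : ℝ) - (k : ℝ)))
  doubling : ∀ (k : ℕ) (m m' : Fin n → ℤ), (∀ i, |m i - m' i| ≤ 1) →
    0 < tkm n p t k m ∧ tkm n p t k m ≤ (2 : ℝ≥0∞) ^ α₃ * tkm n p t k m'

theorem MemX.memXUpper {α₁ α₂ α₃ : ℝ} {σ₁ : ℝ≥0∞} {t : ℕ → Rn n → ℝ}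
    (ht : MemX n α₁ α₂ α₃ σ₁ p p t) : MemXUpper n α₂ α₃ p t := by
  obtain ⟨hadm, -, ⟨C₂, -, hC₂, hgrowth⟩, hdoubling⟩ := ht
  exact ⟨hadm, ⟨C₂, hC₂, hgrowth⟩, hdoubling⟩

theorem MemXUpper.exists_lqNorm_descendants_le {α₂ α₃ : ℝ} {t : ℕ → Rn n → ℝ}
    (ht : MemXUpper n α₂ α₃ p t) (hp : 0 < p) : ∃ C < ∞, ∀ N k m,
      lqNorm p (fun m' : {m' // dyadicAncestor N m' = m} => tkm n p t (N + k) m') ≤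
        C * 2 ^ (α₂ * N) * tkm n p t k m := by
  obtain ⟨C, hC, hgrowth⟩ := ht.growth
  refine ⟨C, hC, fun N k m => ?_⟩
  have h := hgrowth k (N + k) (Nat.le_add_left k N) m
  set a := ((2 : ℝ≥0∞) ^ (k * n)) ^ (1 / p.toReal)
  have ha₀ : a ≠ 0 := (ENNReal.rpow_pos (by positivity) (by simp)).ne'
  have ha_top : a ≠ ∞ := ENNReal.rpow_ne_top_of_ne_zero (by simp) (by simp)
  have ht₀ : tkm n p t k m ≠ 0 := (ht.doubling k m m (by simp)).1.ne'
  have ht_top : tkm n p t k m ≠ ∞ := (tkm_lt_top ht.admissible k m).ne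
  rw [avgNorm_tbarOf_self hp, avgNorm_tbarOf_add hp,
    ENNReal.inv_mul_le_iff (mul_ne_zero ha₀ ht₀) (ENNReal.mul_ne_top ha_top ht_top), mul_assoc a,
    ENNReal.mul_le_mul_iff_right ha₀ ha_top, Nat.cast_add, add_sub_cancel_right, mul_comm] at h
  exact h

theorem MemXUpper.exists_lqNorm_mul_sum_ancestor_le {α₂ α₃ : ℝ} {t : ℕ → Rn n → ℝ}
    (ht : MemXUpper n α₂ α₃ p t) (hp : 0 < p) (R : ℕ) :
    ∃ C < ∞, ∀ (N k : ℕ) (B : (Fin n → ℤ) → ℝ≥0∞),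
      lqNorm p (fun m => tkm n p t (N + k) m *
          ∑ u ∈ latticeBall n R, B (dyadicAncestor N m + u)) ≤
        C * 2 ^ (α₂ * N) * lqNorm p (fun m => tkm n p t k m * B m) := by
  obtain ⟨C, hC, hgrowth⟩ := ht.exists_lqNorm_descendants_le hp
  set c : ℝ≥0∞ := 2 ^ α₃
  have hc : c < ∞ := (ENNReal.rpow_ne_top_of_ne_zero (by simp) (by simp)).lt_top
  set D := LpAddConst p ^ (latticeBall n R).card * ((latticeBall n R).card * c ^ R)
  have hD : D < ∞ := mul_lt_top (pow_lt_top (LpAddConst_lt_top p))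
    (mul_lt_top (natCast_lt_top _) (pow_lt_top hc))
  refine ⟨C * D, mul_lt_top hC hD, fun N k B => ?_⟩
  calc lqNorm p (fun m => tkm n p t (N + k) m *
        ∑ u ∈ latticeBall n R, B (dyadicAncestor N m + u))
      ≤ C * 2 ^ (α₂ * N) *
          lqNorm p (fun m => tkm n p t k m * ∑ u ∈ latticeBall n R, B (m + u)) :=
        lqNorm_sum_fiber_le hp (dyadicAncestor N) (fun m => ∑ u ∈ latticeBall n R, B (m + u))
          (hgrowth N k)
    _ ≤ C * 2 ^ (α₂ * N) * (D * lqNorm p (fun m => tkm n p t k m * B m)) := by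
        gcongr _ * ?_
        exact lqNorm_mul_sum_latticeBall_le hp (fun m m' h => (ht.doubling k m m' h).2) R B
    _ = _ := by ring

end Weights

/-! ### Discretisation of the quasinorm -/

section Discretisation

variable {n : ℕ} {p q : ℝ≥0∞} {α₂ α₃ : ℝ} {t : ℕ → Rn n → ℝ}

/-- The weighted `ℓ_p`-quasinorm of the local differences over the dyadic cubes of level `k`: the
discrete counterpart of the level `k` term of `tildeBnorm`. -/
def dyadicLevelNorm (n l : ℕ) (p r : ℝ≥0∞) (t : ℕ → Rn n → ℝ) (φ : Rn n → ℝ) (k : ℕ) : ℝ≥0∞ :=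
  lqNorm p fun m => tkm n p t k m * dyadicDelta n l r φ k m

/-- The discrete counterpart of the last term of `tildeBnorm`. -/
def dyadicBaseNorm (n : ℕ) (p r : ℝ≥0∞) (t : ℕ → Rn n → ℝ) (φ : Rn n → ℝ) : ℝ≥0∞ :=
  lqNorm p fun m => tkm n p t 0 m * eLpNorm φ r (volume.restrict (dyadicCubeHalf n 0 m))

/-- The discrete counterpart of `tildeBnorm`, with the cubes centred at the points of `ℝⁿ` replaced
by the dyadic ones. -/
def dyadicBnorm (n l : ℕ) (p q r : ℝ≥0∞) (t : ℕ → Rn n → ℝ) (φ : Rn n → ℝ) : ℝ≥0∞ :=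
  lqNorm q (fun k => dyadicLevelNorm n l p r t φ (k + 1)) + dyadicBaseNorm n p r t φ

theorem tildeBnorm_eq (n l : ℕ) (p q r : ℝ≥0∞) (t : ℕ → Rn n → ℝ) (φ : Rn n → ℝ) :
    tildeBnorm n l p q r t φ =
      lqNorm q (fun k => lpNormE p volume fun x => ENNReal.ofReal (t (k + 1) x) *
        deltaE n l r (2 ^ (1 - ((k + 1 : ℕ) : ℤ))) (openCube x (1 / 2 ^ (k + 1))) φ) +
      lpNormE p volume fun x =>
        ENNReal.ofReal (t 0 x) * eLpNorm φ r (volume.restrict (openCube x (1 / 2 ^ 0))) := by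
  have hpow : ∀ k : ℕ, (2 : ℝ) ^ (-((k : ℤ) + 1)) = 1 / 2 ^ (k + 1) := fun k => by
    rw [zpow_neg, one_div]
    norm_cast
  simp only [tildeBnorm, tildeBnormE, hpow, Nat.cast_add, Nat.cast_one, pow_zero, div_one]

theorem dyadicBnorm_le_tildeBnorm (hp : 0 < p) (ht : pAdmissible n p t) (l : ℕ) (q r : ℝ≥0∞)
    (φ : Rn n → ℝ) : dyadicBnorm n l p q r t φ ≤ tildeBnorm n l p q r t φ := by
  rw [tildeBnorm_eq]
  refine add_le_add (lqNorm_mono fun k => ?_) ?_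
  · exact lqNorm_tkm_le_lpNormE_mul hp ht _ fun m x hx =>
      dyadicDelta_le_deltaE_openCube l r φ hx le_rfl
  · exact lqNorm_tkm_le_lpNormE_mul hp ht 0 fun m x hx =>
      eLpNorm_mono_measure φ (Measure.restrict_mono (dyadicCubeHalf_subset_openCube hx) le_rfl)

theorem MemXUpper.exists_lqNorm_le_ancestor (ht : MemXUpper n α₂ α₃ p t) (hp : 0 < p) (N : ℕ)
    (R : ℕ) {K : ℝ≥0∞} (hK : K < ∞) : ∃ C < ∞, ∀ (k : ℕ) (A B : (Fin n → ℤ) → ℝ≥0∞),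
      (∀ m, A m ≤ K * ∑ u ∈ latticeBall n R, B (dyadicAncestor N m + u)) →
      lqNorm p (fun m => tkm n p t (N + k) m * A m) ≤
        C * lqNorm p (fun m => tkm n p t k m * B m) := by
  obtain ⟨C, hC, h⟩ := ht.exists_lqNorm_mul_sum_ancestor_le hp R
  refine ⟨K * (C * 2 ^ (α₂ * N)), mul_lt_top hK (mul_lt_top hC
    (ENNReal.rpow_ne_top_of_ne_zero (by simp) (by simp)).lt_top), fun k A B hAB => ?_⟩
  calc lqNorm p (fun m => tkm n p t (N + k) m * A m)
      ≤ lqNorm p (fun m => K * (tkm n p t (N + k) m *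
          ∑ u ∈ latticeBall n R, B (dyadicAncestor N m + u))) := by
        refine lqNorm_mono fun m => ?_
        rw [mul_left_comm]
        gcongr
        exact hAB m
    _ ≤ _ := by
        rw [lqNorm_const_mul hp, mul_assoc K]
        gcongr _ * ?_
        exact h N k B

theorem MemXUpper.exists_lqNorm_le_neighbors (ht : MemXUpper n α₂ α₃ p t) (hp : 0 < p) (R : ℕ)
    {K : ℝ≥0∞} (hK : K < ∞) : ∃ C < ∞, ∀ (k : ℕ) (A B : (Fin n → ℤ) → ℝ≥0∞),
      (∀ m, A m ≤ K * ∑ u ∈ latticeBall n R, B (m + u)) →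
      lqNorm p (fun m => tkm n p t k m * A m) ≤
        C * lqNorm p (fun m => tkm n p t k m * B m) := by
  have hself : ∀ m : Fin n → ℤ, dyadicAncestor 0 m = m := fun m =>
    funext fun i => Int.ediv_one (m i)
  simpa only [zero_add, hself] using ht.exists_lqNorm_le_ancestor hp 0 R hK

theorem MemXUpper.exists_tildeBnorm_le_dyadicBnorm (ht : MemXUpper n α₂ α₃ p t) (hp : 0 < p)
    (hq : 0 < q) (r : ℝ≥0∞) : ∃ C < ∞, ∀ l (φ : Rn n → ℝ), Measurable φ →
      tildeBnorm n l p q r t φ ≤ C * dyadicBnorm n l p q r t φ := by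
  have hA : LpAddConst r ^ (latticeBall n 1).card < ∞ := pow_lt_top (LpAddConst_lt_top r)
  obtain ⟨C, hC, h⟩ := ht.exists_lqNorm_le_neighbors hp 1 hA
  refine ⟨C, hC, fun l φ hφ => ?_⟩
  rw [tildeBnorm_eq, dyadicBnorm, mul_add, ← lqNorm_const_mul hq]
  refine add_le_add (lqNorm_mono fun k => ?_) ?_
  · refine (lpNormE_mul_le_lqNorm_tkm hp ht.admissible (k + 1) fun m x hx => ?_).trans
      (h (k + 1) _ (dyadicDelta n l r φ (k + 1)) fun m => le_rfl)
    exact deltaE_openCube_le_sum_dyadicDelta l r hφ hx 1 (by simp)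
  · refine (lpNormE_mul_le_lqNorm_tkm hp ht.admissible 0 fun m x hx => ?_).trans
      (h 0 _ (fun m => eLpNorm φ r (volume.restrict (dyadicCubeHalf n 0 m))) fun m => le_rfl)
    refine eLpNorm_restrict_le_of_subset_biUnion hφ.aestronglyMeasurable
      (fun _ _ => measurableSet_dyadicCubeHalf _ _) ?_ r
    simpa using openCube_subset_biUnion_dyadicCubeHalf hx 1

end Discretisation

/-! ### Change of the difference order -/

section DifferenceOrder

variable {n : ℕ} {p q : ℝ≥0∞} {α₂ α₃ : ℝ} {t : ℕ → Rn n → ℝ}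

theorem MemXUpper.exists_dyadicBnorm_succ_le (ht : MemXUpper n α₂ α₃ p t) (hp : 0 < p) (hq : 0 < q)
    (l : ℕ) (r : ℝ≥0∞) : ∃ C < ∞, ∀ φ : Rn n → ℝ, Measurable φ →
      dyadicBnorm n (l + 1) p q r t φ ≤ C * dyadicBnorm n l p q r t φ := by
  obtain ⟨K, hK, hdiff⟩ := exists_dyadicDelta_succ_le (n := n) l r
  obtain ⟨C, hC, h⟩ := ht.exists_lqNorm_le_neighbors hp 4 hK
  refine ⟨C + 1, add_lt_top.2 ⟨hC, one_lt_top⟩, fun φ hφ => ?_⟩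
  rw [dyadicBnorm, dyadicBnorm, mul_add]
  refine add_le_add ?_ (le_mul_of_one_le_left' le_add_self)
  rw [← lqNorm_const_mul hq]
  refine lqNorm_mono fun k => (h (k + 1) _ _ (hdiff φ hφ (k + 1))).trans ?_
  exact mul_le_mul_left le_self_add _

theorem MemXUpper.exists_dyadicLevelNorm_le_dyadicBaseNorm (ht : MemXUpper n α₂ α₃ p t)
    (hp : 0 < p) (l : ℕ) (r : ℝ≥0∞) (M : ℕ) : ∃ C < ∞, ∀ φ : Rn n → ℝ, Measurable φ → ∀ k < M,
      dyadicLevelNorm n l p r t φ k ≤ C * dyadicBaseNorm n p r t φ := by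
  have hlevel : ∀ k, ∃ C < ∞, ∀ φ : Rn n → ℝ, Measurable φ →
      dyadicLevelNorm n l p r t φ k ≤ C * dyadicBaseNorm n p r t φ := fun k => by
    obtain ⟨K, hK, hdiff⟩ := exists_dyadicDelta_le_eLpNorm (n := n) l k r
    obtain ⟨C, hC, h⟩ := ht.exists_lqNorm_le_ancestor hp k (2 * l + 1) hK
    exact ⟨C, hC, fun φ hφ => h 0 _ _ (hdiff φ hφ)⟩
  choose C hC h using hlevel
  refine ⟨∑ k ∈ Finset.range M, C k, sum_lt_top.2 fun k _ => hC k, fun φ hφ k hk => ?_⟩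
  refine (h k φ hφ).trans (mul_le_mul_left ?_ _)
  exact Finset.single_le_sum (f := C) (fun _ _ => zero_le) (Finset.mem_range.2 hk)

theorem exists_mul_pow_mul_rpow_le_half {α₂ : ℝ} {l : ℕ} (hl : α₂ < l) {K : ℝ≥0∞} (hK : K ≠ ∞) :
    ∃ N : ℕ, 0 < N ∧ K * (((2⁻¹ : ℝ≥0∞) ^ l) ^ N * 2 ^ (α₂ * N)) ≤ 2⁻¹ := by
  have hpow : ∀ N : ℕ, ((2⁻¹ : ℝ≥0∞) ^ l) ^ N * 2 ^ (α₂ * N) = (2 ^ (α₂ - l)) ^ N := fun N => by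
    rw [ENNReal.rpow_mul, ENNReal.rpow_natCast, ← mul_pow, ENNReal.rpow_sub _ _ (by simp) (by simp),
      ENNReal.rpow_natCast, div_eq_mul_inv, ENNReal.inv_pow, mul_comm]
  have hlt : (2 : ℝ≥0∞) ^ (α₂ - l) < 1 :=
    ENNReal.rpow_lt_one_of_one_lt_of_neg one_lt_two (sub_neg.2 hl)
  have hlim := ENNReal.Tendsto.const_mul (a := K)
    (ENNReal.tendsto_pow_atTop_nhds_zero_of_lt_one hlt) (Or.inr hK)
  rw [mul_zero] at hlim
  obtain ⟨N, hN, hpos⟩ := ((hlim.eventually_le_const (u := 2⁻¹) (by simp)).and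
    (eventually_gt_atTop 0)).exists
  exact ⟨N, hpos, by rwa [hpow]⟩

theorem MemXUpper.exists_dyadicLevelNorm_le_half_mul_add (ht : MemXUpper n α₂ α₃ p t) (hp : 0 < p)
    {l : ℕ} (hl : α₂ < l) (q r : ℝ≥0∞) :
    ∃ N : ℕ, 0 < N ∧ ∃ M, ∃ θ, LpAddConst q * θ ≤ 2⁻¹ ∧ ∃ C < ∞,
      ∀ φ : Rn n → ℝ, Measurable φ → ∀ k, dyadicLevelNorm n l p r t φ (N + (M + k)) ≤
        θ * dyadicLevelNorm n l p r t φ (M + k) + C * dyadicLevelNorm n (l + 1) p r t φ k := by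
  obtain ⟨D, hD, hancestor⟩ := ht.exists_lqNorm_mul_sum_ancestor_le hp 4
  set A := LpAddConst r ^ ((latticeBall n 4).card + 1)
  have hA : A < ∞ := pow_lt_top (LpAddConst_lt_top r)
  obtain ⟨N, hN, hθ⟩ := exists_mul_pow_mul_rpow_le_half hl
    (K := LpAddConst q * (LpAddConst p * (A * D))) (mul_lt_top (LpAddConst_lt_top q)
      (mul_lt_top (LpAddConst_lt_top p) (mul_lt_top hA hD))).ne
  obtain ⟨M, K, hK, hdiff⟩ := exists_dyadicDelta_le_dilate_add (n := n) l N r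
  set ρ : ℝ≥0∞ := ((2⁻¹ : ℝ≥0∞) ^ l) ^ N
  have hweight : (2 : ℝ≥0∞) ^ (α₂ * (N + M : ℕ)) < ∞ :=
    (ENNReal.rpow_ne_top_of_ne_zero (by simp) (by simp)).lt_top
  refine ⟨N, hN, M, LpAddConst p * (A * ρ * (D * 2 ^ (α₂ * N))), hθ.trans' (by ring_nf; rfl),
    LpAddConst p * (K * (D * 2 ^ (α₂ * (N + M : ℕ)))), mul_lt_top (LpAddConst_lt_top p)
      (mul_lt_top hK (mul_lt_top hD hweight)), fun φ hφ k => ?_⟩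
  calc dyadicLevelNorm n l p r t φ (N + (M + k))
      ≤ lqNorm p fun m =>
          A * ρ * (tkm n p t (N + (M + k)) m *
            ∑ u ∈ latticeBall n 4, dyadicDelta n l r φ (M + k) (dyadicAncestor N m + u)) +
          K * (tkm n p t ((N + M) + k) m *
            ∑ u ∈ latticeBall n 4, dyadicDelta n (l + 1) r φ k (dyadicAncestor (N + M) m + u)) := by
        refine lqNorm_mono fun m => (mul_le_mul_right (hdiff φ hφ k m) _).trans_eq ?_
        rw [add_assoc N M k]
        ring
    _ ≤ LpAddConst p * (A * ρ * (D * 2 ^ (α₂ * N) * dyadicLevelNorm n l p r t φ (M + k)) +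
          K * (D * 2 ^ (α₂ * (N + M : ℕ)) * dyadicLevelNorm n (l + 1) p r t φ k)) := by
        refine (lqNorm_add_le hp _ _).trans ?_
        rw [lqNorm_const_mul hp, lqNorm_const_mul hp]
        gcongr _ * (_ * ?_ + _ * ?_)
        · exact hancestor N (M + k) _
        · exact hancestor (N + M) k _
    _ = _ := by ring

theorem exists_lqNorm_ite_lt_le (hq : 0 < q) (L : ℕ) :
    ∃ C < ∞, ∀ v : ℝ≥0∞, lqNorm q (fun k => if k < L then v else 0) ≤ C * v := by
  refine ⟨lqNorm q (fun k => if k < L then 1 else 0),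
    lqNorm_lt_top_of_support_subset hq (s := Finset.range L) (fun k => by split_ifs <;> simp)
      (fun k hk => by simpa using hk), fun v => ?_⟩
  rw [mul_comm, ← lqNorm_const_mul hq]
  exact lqNorm_mono fun k => by simp

theorem exists_lqNorm_le_of_le_mul_delay (hq : 0 < q) {N L : ℕ} (hN : 0 < N) (hNL : N ≤ L)
    {θ : ℝ≥0∞} (hθ : LpAddConst q * θ ≤ 2⁻¹) {A E : ℝ≥0∞} (hA : A < ∞) (hE : E < ∞) :
    ∃ C < ∞, ∀ (a b : ℕ → ℝ≥0∞) (v : ℝ≥0∞), (∀ k < L, a k ≤ E * v) →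
      (∀ k, a (L + k) ≤ θ * a (L + k - N) + A * b k) → lqNorm q a ≤ C * (lqNorm q b + v) := by
  obtain ⟨K, hK, hconst⟩ := exists_lqNorm_ite_lt_le hq L
  have hq_top := LpAddConst_lt_top q
  refine ⟨2 * (LpAddConst q * (LpAddConst q * (A + K * E))), mul_lt_top ofNat_lt_top
    (mul_lt_top hq_top (mul_lt_top hq_top (add_lt_top.2 ⟨hA, mul_lt_top hK hE⟩))),
    fun a b v hlow hhigh => ?_⟩
  have hrec : ∀ k, a k ≤
      θ * delay N a k + (A * delay L b k + if k < L then E * v else 0) := fun k => by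
    obtain hk | hk := lt_or_ge k L
    · simpa [hk] using (hlow k hk).trans (le_add_left le_add_self)
    · obtain ⟨k, rfl⟩ := Nat.exists_eq_add_of_le hk
      simpa [delay_add_left, delay, hNL.trans hk] using hhigh k
  calc lqNorm q a
      ≤ 2 * (LpAddConst q * lqNorm q fun k => A * delay L b k + if k < L then E * v else 0) :=
        lqNorm_le_of_le_mul_delay_add hq hN hθ hrec
    _ ≤ 2 * (LpAddConst q * (LpAddConst q * (A * lqNorm q b + K * (E * v)))) := by
        gcongr _ * (_ * ?_)
        refine (lqNorm_add_le hq _ _).trans ?_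
        rw [lqNorm_const_mul hq]
        gcongr _ * (_ * ?_ + ?_)
        · exact lqNorm_delay_le hq L b
        · exact hconst _
    _ ≤ 2 * (LpAddConst q * (LpAddConst q * ((A + K * E) * (lqNorm q b + v)))) := by
        gcongr _ * (_ * (_ * ?_))
        rw [mul_add, ← mul_assoc K]
        gcongr
        · exact le_self_add
        · exact le_add_self
    _ = _ := by ring

theorem MemXUpper.exists_dyadicBnorm_le_succ (ht : MemXUpper n α₂ α₃ p t) (hp : 0 < p) (hq : 0 < q)
    {l : ℕ} (hl : α₂ < l) (r : ℝ≥0∞) : ∃ C < ∞, ∀ φ : Rn n → ℝ, Measurable φ →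
      dyadicBnorm n l p q r t φ ≤ C * dyadicBnorm n (l + 1) p q r t φ := by
  obtain ⟨N, hN, M, θ, hθ, A, hA, hstep⟩ := ht.exists_dyadicLevelNorm_le_half_mul_add hp hl q r
  obtain ⟨E, hE, hlow⟩ := ht.exists_dyadicLevelNorm_le_dyadicBaseNorm hp l r (N + M + 1)
  obtain ⟨C, hC, h⟩ := exists_lqNorm_le_of_le_mul_delay hq hN (Nat.le_add_right N M) hθ hA hE
  refine ⟨C + 1, add_lt_top.2 ⟨hC, one_lt_top⟩, fun φ hφ => ?_⟩
  have hlevels := h (fun k => dyadicLevelNorm n l p r t φ (k + 1))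
    (fun k => dyadicLevelNorm n (l + 1) p r t φ (k + 1)) (dyadicBaseNorm n p r t φ)
    (fun k hk => hlow φ hφ (k + 1) (by lia)) fun k => by
      rw [show N + M + k - N = M + k by lia]
      simpa only [add_assoc] using hstep φ hφ (k + 1)
  rw [add_mul, one_mul]
  exact add_le_add hlevels le_add_self

theorem MemXUpper.exists_dyadicBnorm_le_of_le (ht : MemXUpper n α₂ α₃ p t) (hp : 0 < p)
    (hq : 0 < q) {l l' : ℕ} (hl : α₂ < l) (hll' : l ≤ l') (r : ℝ≥0∞) :
    ∃ C < ∞, ∀ φ : Rn n → ℝ, Measurable φ →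
      dyadicBnorm n l p q r t φ ≤ C * dyadicBnorm n l' p q r t φ := by
  induction l', hll' using Nat.le_induction with
  | base => exact ⟨1, one_lt_top, fun φ _ => (one_mul _).ge⟩
  | succ j hlj ih =>
    obtain ⟨C, hC, hle⟩ := ih
    obtain ⟨D, hD, hsucc⟩ := ht.exists_dyadicBnorm_le_succ hp hq (hl.trans_le (Nat.cast_le.2 hlj)) r
    refine ⟨C * D, mul_lt_top hC hD, fun φ hφ => (hle φ hφ).trans ?_⟩
    rw [mul_assoc]
    gcongr
    exact hsucc φ hφ

theorem MemXUpper.exists_dyadicBnorm_ge_of_le (ht : MemXUpper n α₂ α₃ p t) (hp : 0 < p)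
    (hq : 0 < q) {l l' : ℕ} (hll' : l ≤ l') (r : ℝ≥0∞) : ∃ C < ∞, ∀ φ : Rn n → ℝ, Measurable φ →
      dyadicBnorm n l' p q r t φ ≤ C * dyadicBnorm n l p q r t φ := by
  induction l', hll' using Nat.le_induction with
  | base => exact ⟨1, one_lt_top, fun φ _ => (one_mul _).ge⟩
  | succ j _ ih =>
    obtain ⟨C, hC, hle⟩ := ih
    obtain ⟨D, hD, hsucc⟩ := ht.exists_dyadicBnorm_succ_le hp hq j r
    refine ⟨D * C, mul_lt_top hD hC, fun φ hφ => (hsucc φ hφ).trans ?_⟩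
    rw [mul_assoc]
    gcongr
    exact hle φ hφ

theorem MemXUpper.exists_tildeBnorm_le_of_dyadicBnorm_le (ht : MemXUpper n α₂ α₃ p t) (hp : 0 < p)
    (hq : 0 < q) {l l' : ℕ} {r : ℝ≥0∞} (h : ∃ C < ∞, ∀ φ : Rn n → ℝ, Measurable φ →
      dyadicBnorm n l p q r t φ ≤ C * dyadicBnorm n l' p q r t φ) :
    ∃ C < ∞, ∀ φ : Rn n → ℝ, Measurable φ →
      tildeBnorm n l p q r t φ ≤ C * tildeBnorm n l' p q r t φ := by
  obtain ⟨C, hC, hle⟩ := h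
  obtain ⟨A, hA, hdiscrete⟩ := ht.exists_tildeBnorm_le_dyadicBnorm hp hq r
  refine ⟨A * C, mul_lt_top hA hC, fun φ hφ => ?_⟩
  calc tildeBnorm n l p q r t φ ≤ A * dyadicBnorm n l p q r t φ := hdiscrete l φ hφ
    _ ≤ A * (C * dyadicBnorm n l' p q r t φ) := by
        gcongr
        exact hle φ hφ
    _ ≤ A * (C * tildeBnorm n l' p q r t φ) := by
        gcongr
        exact dyadicBnorm_le_tildeBnorm hp ht.admissible l' q r φ
    _ = A * C * tildeBnorm n l' p q r t φ := (mul_assoc _ _ _).symm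

end DifferenceOrder

theorem norm_indep_of_order_general (n : ℕ) (p q r : ℝ≥0∞) (hp : 0 < p) (hq : 0 < q) (_hr : 0 < r)
    (α₂ α₃ : ℝ) (t : ℕ → Rn n → ℝ) (ht : MemXUpper n α₂ α₃ p t) (l l' : ℕ) (hl : α₂ < l)
    (hll' : l ≤ l') :
    ∃ C₁ C₂ : ℝ≥0∞, 0 < C₁ ∧ C₁ < ∞ ∧ 0 < C₂ ∧ C₂ < ∞ ∧
      ∀ φ : Rn n → ℝ, Measurable φ →
        C₁ * tildeBnorm n l p q r t φ ≤ tildeBnorm n l' p q r t φ ∧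
        tildeBnorm n l' p q r t φ ≤ C₂ * tildeBnorm n l p q r t φ ∧
        (MemTildeB n l p q r t φ ↔ MemTildeB n l' p q r t φ) := by
  obtain ⟨C, hC, hle⟩ := ht.exists_tildeBnorm_le_of_dyadicBnorm_le hp hq
    (ht.exists_dyadicBnorm_le_of_le hp hq hl hll' r)
  obtain ⟨D, hD, hge⟩ := ht.exists_tildeBnorm_le_of_dyadicBnorm_le hp hq
    (ht.exists_dyadicBnorm_ge_of_le hp hq hll' r)
  have hC' : C + 1 ≠ ∞ := add_ne_top.2 ⟨hC.ne, one_ne_top⟩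
  refine ⟨(C + 1)⁻¹, D + 1, ENNReal.inv_pos.2 hC', by simp, by simp,
    add_lt_top.2 ⟨hD, one_lt_top⟩, fun φ hφ => ⟨?_, ?_, ?_⟩⟩
  · rw [ENNReal.inv_mul_le_iff (by simp) hC']
    exact (hle φ hφ).trans (mul_le_mul_left le_self_add _)
  · exact (hge φ hφ).trans (mul_le_mul_left le_self_add _)
  · exact and_congr_right fun _ => ⟨fun h => (hge φ hφ).trans_lt (mul_lt_top hD h),
      fun h => (hle φ hφ).trans_lt (mul_lt_top hC h)⟩

/-- **Corollary 4.3: independence of the quasinorm of `B̃^l_{p,q,r}(ℝⁿ,{t_k})` of the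
difference order `l`, for `l > α₂`.** -/
theorem norm_indep_of_order (n : ℕ) (hn : 0 < n) (p q r : ℝ≥0∞)
    (hp : 0 < p) (hq : 0 < q) (hr : 0 < r)
    (α₁ α₂ α₃ : ℝ) (hα₃ : 0 ≤ α₃) (σ₁ : ℝ≥0∞) (hσ₁ : 0 < σ₁)
    (t : ℕ → Rn n → ℝ) (ht : MemX n α₁ α₂ α₃ σ₁ p p t)
    (l l' : ℕ) (hl0 : 0 < l) (hl : α₂ < l) (hll' : l < l') :
    ∃ C₁ C₂ : ℝ≥0∞, 0 < C₁ ∧ C₁ < ∞ ∧ 0 < C₂ ∧ C₂ < ∞ ∧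
      ∀ φ : Rn n → ℝ, MemLrLoc n r φ →
        C₁ * tildeBnorm n l p q r t φ ≤ tildeBnorm n l' p q r t φ ∧
        tildeBnorm n l' p q r t φ ≤ C₂ * tildeBnorm n l p q r t φ ∧
        (MemTildeB n l p q r t φ ↔ MemTildeB n l' p q r t φ) := by
  obtain ⟨C₁, C₂, h₁, h₁', h₂, h₂', h⟩ :=
    norm_indep_of_order_general n p q r hp hq hr α₂ α₃ t ht.memXUpper l l' hl hll'.le
  exact ⟨C₁, C₂, h₁, h₁', h₂, h₂', fun φ hφ => h φ hφ.1⟩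

end
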